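/- Let W be any DMC with 0 < V_min and set β := √(V_min/V_max). Then for every ε ∈ (0,1): if ε ∈ (0, β/(1+β)], then liminf_{n→∞} (log M*_fb(n, ε) − nC)/√n ≥ √(V_min)·Φ^{-1}((1/(2β))·ε(1+β)); and if ε ∈ (β/(1+β), 1), then liminf_{n→∞} (log M*_fb(n, ε) − nC)/√n ≥ √(V_max)·Φ^{-1}((1/2)·[ε(1+β) + (1−β)]). -/

import Mathlib

open MeasureTheory Real Filter Set
open scoped BigOperators ENNReal Classical

noncomputable section

namespace Paper

variable {X Y : Type*} [Fintype X] [Fintype Y]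

/-- `P` is a probability mass function on the finite alphabet `X`. -/
def IsDist (P : X → ℝ) : Prop := (∀ x, 0 ≤ P x) ∧ ∑ x, P x = 1

/-- `W` is a discrete memoryless channel (a stochastic matrix). -/
def IsChannel (W : X → Y → ℝ) : Prop := ∀ x, IsDist (W x)

/-- `W` has no all-zero column. -/
def NoZeroColumn (W : X → Y → ℝ) : Prop := ∀ y, ∃ x, 0 < W x y

/-- Output distribution induced by input distribution `P` through `W`. -/
def outDist (P : X → ℝ) (W : X → Y → ℝ) (y : Y) : ℝ := ∑ x, P x * W x y

/-- Mutual information `I(P; W)` (in nats). -/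
def mutInfo (P : X → ℝ) (W : X → Y → ℝ) : ℝ :=
  ∑ x, ∑ y, P x * W x y * Real.log (W x y / outDist P W y)

/-- Shannon capacity `C`. -/
def capacity (W : X → Y → ℝ) : ℝ :=
  sSup {c | ∃ P, IsDist P ∧ mutInfo P W = c}

/-- The set of capacity-achieving input distributions `Π*`. -/
def capacityAchievers (W : X → Y → ℝ) : Set (X → ℝ) :=
  {P | IsDist P ∧ mutInfo P W = capacity W}

/-- The (unique) capacity-achieving output distribution `q*`. -/
def qStar (W : X → Y → ℝ) : Y → ℝ :=
  if h : (capacityAchievers W).Nonempty then outDist h.choose W else fun _ => 0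

/-- The information density `i*(x,y) = log (W(y|x)/q*(y))`. -/
def iStar (W : X → Y → ℝ) (x : X) (y : Y) : ℝ := Real.log (W x y / qStar W y)

/-- `ν_x = Var[i*(x,Y)]`, `Y ~ W(·|x)`. -/
def nu (W : X → Y → ℝ) (x : X) : ℝ :=
  ∑ y, W x y * (iStar W x y) ^ 2 - (∑ y, W x y * iStar W x y) ^ 2

/-- `V_min`. -/
def Vmin (W : X → Y → ℝ) : ℝ :=
  sInf {v | ∃ P ∈ capacityAchievers W, v = ∑ x, P x * nu W x}

/-- `V_max`. -/
def Vmax (W : X → Y → ℝ) : ℝ :=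
  sSup {v | ∃ P ∈ capacityAchievers W, v = ∑ x, P x * nu W x}

/-- `V_ε`. -/
def Veps (W : X → Y → ℝ) (ε : ℝ) : ℝ := if ε < 1/2 then Vmin W else Vmax W

/-- `ν_min = min_x ν_x`. -/
def numin (W : X → Y → ℝ) [Nonempty X] : ℝ := ⨅ x, nu W x

/-- `ν_max = max_x ν_x`. -/
def numax (W : X → Y → ℝ) [Nonempty X] : ℝ := ⨆ x, nu W x

/-- Average error probability of the feedback code `(enc, dec)` with `M` messages
and blocklength `n`. -/
def errProb (W : X → Y → ℝ) (n M : ℕ) (enc : Fin M → List Y → X)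
    (dec : (Fin n → Y) → Fin M) : ℝ :=
  (M : ℝ)⁻¹ * ∑ m : Fin M, ∑ y : Fin n → Y,
    (∏ k : Fin n, W (enc m ((List.ofFn y).take (k : ℕ))) (y k)) *
      (if dec y = m then 0 else 1)

/-- Minimum average error probability of `(n,R)` feedback codes. -/
def minErr (W : X → Y → ℝ) (n : ℕ) (R : ℝ) : ℝ :=
  sInf {e | ∃ enc dec, e = errProb W n ⌈Real.exp (n * R)⌉₊ enc dec}

/-- `M*_fb(n, ε)`. -/
def Mfb (W : X → Y → ℝ) (n : ℕ) (ε : ℝ) : ℝ :=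
  sSup {m | ∃ R : ℝ, m = (⌈Real.exp (n * R)⌉₊ : ℝ) ∧ minErr W n R ≤ ε}

/-- Standard Gaussian density `φ`. -/
def gpdf (u : ℝ) : ℝ := (Real.sqrt (2 * Real.pi))⁻¹ * Real.exp (-u ^ 2 / 2)

/-- Standard Gaussian CDF `Φ`. -/
def gcdf (t : ℝ) : ℝ := ∫ u in Set.Iic t, gpdf u

/-- Inverse Gaussian CDF `Φ⁻¹`. -/
def gcdfInv : ℝ → ℝ := Function.invFun gcdf

/-- The sequence `(log M*_fb(n,ε) - nC)/√n` whose liminf/limsup is the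
second-order coding rate with feedback. -/
def SOfb (W : X → Y → ℝ) (ε : ℝ) (n : ℕ) : ℝ :=
  (Real.log (Mfb W n ε) - n * capacity W) / Real.sqrt n

lemma sub_le_mul_log_div {p q : ℝ} (hp : 0 ≤ p) (hq : 0 ≤ q) (h : q = 0 → p = 0) :
    0 ≤ p * Real.log (p / q) - p + q := by
  rcases hp.eq_or_lt with rfl | hp
  · simpa using hq
  have hq' : 0 < q := lt_of_le_of_ne hq fun h0 => hp.ne' (h h0.symm)
  have h1 := Real.log_le_sub_one_of_pos (div_pos hq' hp)
  have h2 : Real.log (p / q) = -Real.log (q / p) := by rw [← Real.log_inv, inv_div]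
  have h3 : p * (q / p) = q := by field_simp
  rw [h2]
  nlinarith

lemma eq_of_mul_log_div_le {p q : ℝ} (hp : 0 ≤ p) (hq : 0 ≤ q) (h : q = 0 → p = 0)
    (h0 : p * Real.log (p / q) - p + q ≤ 0) : p = q := by
  rcases hp.eq_or_lt with rfl | hp
  · simp at h0
    linarith
  have hq' : 0 < q := lt_of_le_of_ne hq fun h0 => hp.ne' (h h0.symm)
  by_contra hne
  have h1 := Real.log_lt_sub_one_of_pos (div_pos hq' hp)
    (fun h => hne ((div_eq_one_iff_eq hp.ne').1 h).symm)
  have h2 : Real.log (p / q) = -Real.log (q / p) := by rw [← Real.log_inv, inv_div]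
  have h3 : p * (q / p) = q := by field_simp
  rw [h2] at h0
  nlinarith

/-- Relative entropy of two distributions on a finite alphabet. -/
def klFin (p q : Y → ℝ) : ℝ := ∑ y, p y * Real.log (p y / q y)

lemma klFin_eq {p q : Y → ℝ} (hp : IsDist p) (hq : IsDist q) :
    klFin p q = ∑ y, (p y * Real.log (p y / q y) - p y + q y) := by
  rw [Finset.sum_add_distrib, Finset.sum_sub_distrib, hp.2, hq.2, klFin]
  ring

lemma klFin_nonneg {p q : Y → ℝ} (hp : IsDist p) (hq : IsDist q)
    (h : ∀ y, q y = 0 → p y = 0) : 0 ≤ klFin p q := by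
  rw [klFin_eq hp hq]
  exact Finset.sum_nonneg fun y _ => sub_le_mul_log_div (hp.1 y) (hq.1 y) (h y)

lemma eq_of_klFin_le {p q : Y → ℝ} (hp : IsDist p) (hq : IsDist q)
    (h : ∀ y, q y = 0 → p y = 0) (h0 : klFin p q ≤ 0) : p = q := by
  rw [klFin_eq hp hq] at h0
  have hnn : ∀ y ∈ Finset.univ, 0 ≤ p y * Real.log (p y / q y) - p y + q y :=
    fun y _ => sub_le_mul_log_div (hp.1 y) (hq.1 y) (h y)
  have h1 := (Finset.sum_eq_zero_iff_of_nonneg hnn).1 (le_antisymm h0 (Finset.sum_nonneg hnn))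
  funext y
  exact eq_of_mul_log_div_le (hp.1 y) (hq.1 y) (h y) (h1 y (Finset.mem_univ y)).le

lemma isDist_outDist {P : X → ℝ} {W : X → Y → ℝ} (hW : IsChannel W) (hP : IsDist P) :
    IsDist (outDist P W) := by
  refine ⟨fun y => Finset.sum_nonneg fun x _ => mul_nonneg (hP.1 x) ((hW x).1 y), ?_⟩
  unfold outDist
  rw [Finset.sum_comm]
  simp_rw [← Finset.mul_sum, (hW _).2, mul_one]
  exact hP.2

lemma mul_le_outDist {P : X → ℝ} {W : X → Y → ℝ} (hW : IsChannel W) (hP : IsDist P) (x : X)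
    (y : Y) : P x * W x y ≤ outDist P W y :=
  Finset.single_le_sum (f := fun x => P x * W x y)
    (fun x _ => mul_nonneg (hP.1 x) ((hW x).1 y)) (Finset.mem_univ x)

lemma mutInfo_eq (P : X → ℝ) (W : X → Y → ℝ) :
    mutInfo P W = ∑ x, P x * klFin (W x) (outDist P W) := by
  simp only [mutInfo, klFin, Finset.mul_sum, mul_assoc]

/-- The compensation identity. -/
lemma sum_mul_klFin {P : X → ℝ} {W : X → Y → ℝ} (hW : IsChannel W) (hP : IsDist P)
    {r : Y → ℝ} (hr : ∀ y, r y = 0 → outDist P W y = 0) :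
    ∑ x, P x * klFin (W x) r = mutInfo P W + klFin (outDist P W) r := by
  have h1 : klFin (outDist P W) r
      = ∑ x, ∑ y, P x * W x y * Real.log (outDist P W y / r y) := by
    rw [Finset.sum_comm]
    refine Finset.sum_congr rfl fun y _ => ?_
    rw [← Finset.sum_mul]
    rfl
  rw [h1, mutInfo, ← Finset.sum_add_distrib]
  refine Finset.sum_congr rfl fun x _ => ?_
  rw [klFin, Finset.mul_sum, ← Finset.sum_add_distrib]
  refine Finset.sum_congr rfl fun y _ => ?_
  rcases (mul_nonneg (hP.1 x) ((hW x).1 y)).eq_or_lt with h0 | h0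
  · rw [← mul_assoc, ← h0]
    simp
  have hq : 0 < outDist P W y := h0.trans_le (mul_le_outDist hW hP x y)
  have hr' : r y ≠ 0 := fun h => hq.ne' (hr y h)
  have hw : W x y ≠ 0 := fun h => by simp [h] at h0
  rw [Real.log_div hw hr', Real.log_div hw hq.ne', Real.log_div hq.ne' hr']
  ring

lemma bddAbove_mutInfo {W : X → Y → ℝ} (hW : IsChannel W) :
    BddAbove {c | ∃ P, IsDist P ∧ mutInfo P W = c} := by
  refine ⟨∑ _x : X, ∑ _y : Y, (1 : ℝ), ?_⟩
  rintro c ⟨P, hP, rfl⟩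
  refine Finset.sum_le_sum fun x _ => Finset.sum_le_sum fun y _ => ?_
  rcases (mul_nonneg (hP.1 x) ((hW x).1 y)).eq_or_lt with h0 | h0
  · rw [← h0]
    simp
  have hq : 0 < outDist P W y := h0.trans_le (mul_le_outDist hW hP x y)
  have hp : 0 < P x := lt_of_le_of_ne (hP.1 x) fun h => by simp [← h] at h0
  have hw : 0 < W x y := lt_of_le_of_ne ((hW x).1 y) fun h => by simp [← h] at h0
  have hw1 : W x y ≤ 1 := (hW x).2 ▸
    Finset.single_le_sum (f := W x) (fun y _ => (hW x).1 y) (Finset.mem_univ y)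
  have h1 : Real.log (W x y / outDist P W y) ≤ 1 / P x := by
    have h2 : W x y / outDist P W y ≤ 1 / P x := by
      rw [div_le_div_iff₀ hq hp]
      linarith [mul_le_outDist hW hP x y]
    have := Real.log_le_sub_one_of_pos (div_pos hw hq)
    linarith
  calc P x * W x y * Real.log (W x y / outDist P W y)
      ≤ P x * W x y * (1 / P x) := mul_le_mul_of_nonneg_left h1 h0.le
    _ = W x y := by field_simp
    _ ≤ 1 := hw1

lemma mutInfo_le_capacity {P : X → ℝ} {W : X → Y → ℝ} (hW : IsChannel W) (hP : IsDist P) :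
    mutInfo P W ≤ capacity W :=
  le_csSup (bddAbove_mutInfo hW) ⟨P, hP, rfl⟩

/-- Mutual information along the segment from an optimal input distribution. -/
lemma mix_le_capacity {P Q : X → ℝ} {W : X → Y → ℝ} (hW : IsChannel W)
    (hP : P ∈ capacityAchievers W) (hQ : IsDist Q) {t : ℝ} (h0 : 0 < t) (h1 : t < 1) :
    (1 - t) * klFin (outDist P W) (fun y => (1 - t) * outDist P W y + t * outDist Q W y)
      + t * ∑ x, Q x * klFin (W x) (fun y => (1 - t) * outDist P W y + t * outDist Q W y)
      ≤ t * capacity W := by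
  set R : X → ℝ := fun x => (1 - t) * P x + t * Q x with hR
  have h1' : 0 < 1 - t := by linarith
  have hRd : IsDist R := by
    refine ⟨fun x => ?_, ?_⟩
    · have := hP.1.1 x
      have := hQ.1 x
      positivity
    · simp only [hR, Finset.sum_add_distrib, ← Finset.mul_sum, hP.1.2, hQ.2]
      ring
  have hout : (fun y => (1 - t) * outDist P W y + t * outDist Q W y) = outDist R W := by
    funext y
    simp only [outDist, hR, Finset.mul_sum, ← Finset.sum_add_distrib]
    exact Finset.sum_congr rfl fun x _ => by ring
  have hac : ∀ y, outDist R W y = 0 → outDist P W y = 0 := by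
    intro y hy
    rw [← hout] at hy
    have h2 := (isDist_outDist hW hP.1).1 y
    have h3 := (isDist_outDist hW hQ).1 y
    nlinarith [mul_nonneg h0.le h3, mul_nonneg h1'.le h2]
  rw [hout]
  have h4 := mutInfo_le_capacity hW hRd
  rw [mutInfo_eq] at h4
  have h5 := sum_mul_klFin hW hP.1 hac
  rw [hP.2] at h5
  have h6 : ∑ x, R x * klFin (W x) (outDist R W)
      = (1 - t) * ∑ x, P x * klFin (W x) (outDist R W)
        + t * ∑ x, Q x * klFin (W x) (outDist R W) := by
    rw [Finset.mul_sum, Finset.mul_sum, ← Finset.sum_add_distrib]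
    exact Finset.sum_congr rfl fun x _ => by simp only [hR]; ring
  rw [h6, h5] at h4
  nlinarith

lemma outDist_unique {P Q : X → ℝ} {W : X → Y → ℝ} (hW : IsChannel W)
    (hP : P ∈ capacityAchievers W) (hQ : Q ∈ capacityAchievers W) :
    outDist P W = outDist Q W := by
  have hPd := isDist_outDist hW hP.1
  have hQd := isDist_outDist hW hQ.1
  have h := mix_le_capacity hW hP hQ.1 (t := 1 / 2) (by norm_num) (by norm_num)
  set r : Y → ℝ := fun y => (1 - 1 / 2) * outDist P W y + 1 / 2 * outDist Q W y with hr
  have hrd : IsDist r := by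
    refine ⟨fun y => ?_, ?_⟩
    · have := hPd.1 y
      have := hQd.1 y
      simp only [hr]
      linarith
    · simp only [hr, Finset.sum_add_distrib, ← Finset.mul_sum, hPd.2, hQd.2]
      norm_num
  have hac : ∀ y, r y = 0 → outDist P W y = 0 ∧ outDist Q W y = 0 := by
    intro y hy
    have h2 := hPd.1 y
    have h3 := hQd.1 y
    simp only [hr] at hy
    constructor <;> linarith
  rw [sum_mul_klFin hW hQ.1 fun y hy => (hac y hy).2, hQ.2] at h
  have h1 := klFin_nonneg hQd hrd fun y hy => (hac y hy).2
  have h2 := eq_of_klFin_le hPd hrd (fun y hy => (hac y hy).1) (by linarith)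
  funext y
  have h3 := congrFun h2 y
  simp only [hr] at h3
  linarith

lemma outDist_eq_qStar {P : X → ℝ} {W : X → Y → ℝ} (hW : IsChannel W)
    (hP : P ∈ capacityAchievers W) : outDist P W = qStar W := by
  have hne : (capacityAchievers W).Nonempty := ⟨P, hP⟩
  rw [qStar, dif_pos hne]
  exact outDist_unique hW hP hne.choose_spec

lemma klFin_mix_le_capacity {P : X → ℝ} {W : X → Y → ℝ} (hW : IsChannel W)
    (hP : P ∈ capacityAchievers W) (x : X) {t : ℝ} (h0 : 0 < t) (h1 : t < 1) :
    klFin (W x) (fun y => (1 - t) * qStar W y + t * W x y) ≤ capacity W := by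
  have hQ : IsDist (fun x' : X => if x' = x then (1 : ℝ) else 0) :=
    ⟨fun x' => by dsimp only; split_ifs <;> norm_num, by simp⟩
  have hout : outDist (fun x' : X => if x' = x then (1 : ℝ) else 0) W = W x := by
    funext y
    simp [outDist]
  have h := mix_le_capacity hW hP hQ h0 h1
  rw [hout, outDist_eq_qStar hW hP] at h
  simp only [ite_mul, one_mul, zero_mul, Finset.sum_ite_eq', Finset.mem_univ, if_true] at h
  have hq : IsDist (qStar W) := outDist_eq_qStar hW hP ▸ isDist_outDist hW hP.1
  have h1' : 0 < 1 - t := by linarith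
  have h2 : 0 ≤ klFin (qStar W) (fun y => (1 - t) * qStar W y + t * W x y) := by
    refine klFin_nonneg hq ⟨fun y => ?_, ?_⟩ fun y hy => ?_
    · have := hq.1 y
      have := (hW x).1 y
      positivity
    · simp only [Finset.sum_add_distrib, ← Finset.mul_sum, hq.2, (hW x).2]
      ring
    · have h2 := hq.1 y
      have h3 := (hW x).1 y
      nlinarith [mul_nonneg h0.le h3, mul_nonneg h1'.le h2]
  have h3 : t * klFin (W x) (fun y => (1 - t) * qStar W y + t * W x y) ≤ t * capacity W := by
    nlinarith
  exact le_of_mul_le_mul_left h3 h0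

lemma qStar_pos {P : X → ℝ} {W : X → Y → ℝ} (hW : IsChannel W) (hcol : NoZeroColumn W)
    (hP : P ∈ capacityAchievers W) (y : Y) : 0 < qStar W y := by
  have hq : IsDist (qStar W) := outDist_eq_qStar hW hP ▸ isDist_outDist hW hP.1
  refine lt_of_le_of_ne (hq.1 y) fun hy => ?_
  obtain ⟨x, hx⟩ := hcol y
  set w := W x y
  set t := Real.exp (-(|capacity W| / w + 2)) with ht
  have h0 : 0 < t := Real.exp_pos _
  have hpos : 0 < |capacity W| / w + 2 := by positivity
  have h1 : t < 1 := by rw [ht, Real.exp_lt_one_iff]; linarith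
  have h1' : 0 < 1 - t := by linarith
  have h := klFin_mix_le_capacity hW hP x h0 h1
  set r : Y → ℝ := fun y => (1 - t) * qStar W y + t * W x y with hr
  have hrd : IsDist r := by
    refine ⟨fun y => ?_, ?_⟩
    · have := hq.1 y
      have := (hW x).1 y
      simp only [hr]
      positivity
    · simp only [hr, Finset.sum_add_distrib, ← Finset.mul_sum, hq.2, (hW x).2]
      ring
  have hac : ∀ y, r y = 0 → W x y = 0 := by
    intro y hy
    have h2 := hq.1 y
    have h3 := (hW x).1 y
    simp only [hr] at hy
    nlinarith [mul_nonneg h0.le h3, mul_nonneg h1'.le h2]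
  rw [klFin_eq (hW x) hrd] at h
  have h2 := Finset.single_le_sum (f := fun y => W x y * Real.log (W x y / r y) - W x y + r y)
    (fun y _ => sub_le_mul_log_div ((hW x).1 y) (hrd.1 y) (hac y)) (Finset.mem_univ y)
  have hry : r y = t * w := by simp only [hr, ← hy]; ring
  have h3 : Real.log (w / r y) = |capacity W| / w + 2 := by
    rw [hry, show w / (t * w) = t⁻¹ by field_simp, Real.log_inv, ht, Real.log_exp]
    ring
  have h4 : w * Real.log (w / r y) = |capacity W| + 2 * w := by
    rw [h3]
    field_simp
  have h5 : w * Real.log (w / r y) - w + r y ≤ capacity W := h2.trans h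
  have h6 := le_abs_self (capacity W)
  have h7 := hrd.1 y
  linarith

/-- Kuhn-Tucker condition: `D(W(·|x) ‖ q*) ≤ C`. -/
lemma sum_mul_iStar_le {P : X → ℝ} {W : X → Y → ℝ} (hW : IsChannel W) (hcol : NoZeroColumn W)
    (hP : P ∈ capacityAchievers W) (x : X) : ∑ y, W x y * iStar W x y ≤ capacity W := by
  have hlim : Tendsto (fun t : ℝ => klFin (W x) (fun y => (1 - t) * qStar W y + t * W x y))
      (nhdsWithin 0 (Set.Ioi 0)) (nhds (∑ y, W x y * iStar W x y)) := by
    refine Tendsto.mono_left ?_ nhdsWithin_le_nhds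
    refine tendsto_finsetSum _ fun y _ => ?_
    rcases ((hW x).1 y).eq_or_lt with h0 | h0
    · simp [← h0]
    have hq := qStar_pos hW hcol hP y
    have hc : ContinuousAt (fun t : ℝ =>
        W x y * Real.log (W x y / ((1 - t) * qStar W y + t * W x y))) 0 := by
      refine continuousAt_const.mul (ContinuousAt.log (continuousAt_const.div ?_ ?_) ?_)
      · fun_prop
      · simpa using hq.ne'
      · simpa using ⟨h0.ne', hq.ne'⟩
    have := hc.tendsto
    simpa [iStar] using this
  refine le_of_tendsto hlim ?_
  filter_upwards [Ioo_mem_nhdsGT (show (0 : ℝ) < 1 by norm_num)] with t ht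
  exact klFin_mix_le_capacity hW hP x ht.1 ht.2

lemma sum_mul_iStar_eq {P : X → ℝ} {W : X → Y → ℝ} (hW : IsChannel W) (hcol : NoZeroColumn W)
    (hP : P ∈ capacityAchievers W) (x : X) (hx : P x ≠ 0) :
    ∑ y, W x y * iStar W x y = capacity W := by
  have hle := sum_mul_iStar_le hW hcol hP
  have h1 : ∑ x, P x * (capacity W - ∑ y, W x y * iStar W x y) = 0 := by
    have h2 : ∑ x, P x * ∑ y, W x y * iStar W x y = capacity W := by
      rw [← hP.2, mutInfo_eq, outDist_eq_qStar hW hP]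
      rfl
    simp only [mul_sub, Finset.sum_sub_distrib, ← Finset.sum_mul, hP.1.2, h2]
    ring
  have h3 := (Finset.sum_eq_zero_iff_of_nonneg fun x _ =>
    mul_nonneg (hP.1.1 x) (sub_nonneg.2 (hle x))).1 h1 x (Finset.mem_univ x)
  rcases mul_eq_zero.1 h3 with h | h
  · exact absurd h hx
  · linarith

lemma mem_capacityAchievers_iff {W : X → Y → ℝ} (hW : IsChannel W) (P : X → ℝ) :
    P ∈ capacityAchievers W ↔ IsDist P ∧ outDist P W = qStar W ∧
      ∑ x, P x * klFin (W x) (qStar W) = capacity W := by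
  constructor
  · intro hP
    have h := outDist_eq_qStar hW hP
    exact ⟨hP.1, h, by rw [← h, ← mutInfo_eq, hP.2]⟩
  · rintro ⟨h1, h2, h3⟩
    exact ⟨h1, by rw [mutInfo_eq, h2, h3]⟩

lemma isCompact_capacityAchievers {W : X → Y → ℝ} (hW : IsChannel W) :
    IsCompact (capacityAchievers W) := by
  have : capacityAchievers W = stdSimplex ℝ X ∩ ({P | outDist P W = qStar W} ∩
      {P | ∑ x, P x * klFin (W x) (qStar W) = capacity W}) := by
    ext P
    exact mem_capacityAchievers_iff hW P
  rw [this]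
  refine (isCompact_stdSimplex ℝ X).inter_right (IsClosed.inter ?_ ?_)
  · refine isClosed_eq (continuous_pi fun y => ?_) continuous_const
    unfold outDist
    fun_prop
  · exact isClosed_eq (by fun_prop) continuous_const

lemma exists_Vmin_Vmax {P₀ : X → ℝ} {W : X → Y → ℝ} (hW : IsChannel W)
    (hP₀ : P₀ ∈ capacityAchievers W) :
    (∃ P ∈ capacityAchievers W, ∑ x, P x * nu W x = Vmin W) ∧
    (∃ P ∈ capacityAchievers W, ∑ x, P x * nu W x = Vmax W) ∧ Vmin W ≤ Vmax W := by
  have hc := isCompact_capacityAchievers hW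
  have hset : {v | ∃ P ∈ capacityAchievers W, v = ∑ x, P x * nu W x}
      = (fun P : X → ℝ => ∑ x, P x * nu W x) '' capacityAchievers W := by
    ext v
    simp [eq_comm]
  have himg : IsCompact ((fun P : X → ℝ => ∑ x, P x * nu W x) '' capacityAchievers W) :=
    hc.image (by fun_prop)
  have hne : ((fun P : X → ℝ => ∑ x, P x * nu W x) '' capacityAchievers W).Nonempty :=
    ⟨_, P₀, hP₀, rfl⟩
  refine ⟨?_, ?_, ?_⟩
  · rw [Vmin, hset]
    exact himg.sInf_mem hne
  · rw [Vmax, hset]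
    exact himg.sSup_mem hne
  · rw [Vmin, Vmax, hset]
    exact csInf_le_csSup hne himg.bddBelow himg.bddAbove

/-- The centred information density. -/
def centDens (W : X → Y → ℝ) (x : X) (y : Y) : ℝ := iStar W x y - capacity W

lemma sum_mul_centDens {P : X → ℝ} {W : X → Y → ℝ} (hW : IsChannel W) (hcol : NoZeroColumn W)
    (hP : P ∈ capacityAchievers W) :
    ∑ x, P x * ∑ y, W x y * centDens W x y = 0 := by
  refine Finset.sum_eq_zero fun x _ => ?_
  by_cases hx : P x = 0
  · simp [hx]
  simp only [centDens, mul_sub, Finset.sum_sub_distrib, ← Finset.sum_mul, (hW x).2,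
    sum_mul_iStar_eq hW hcol hP x hx]
  ring

lemma sum_mul_centDens_sq {P : X → ℝ} {W : X → Y → ℝ} (hW : IsChannel W)
    (hcol : NoZeroColumn W) (hP : P ∈ capacityAchievers W) :
    ∑ x, P x * ∑ y, W x y * centDens W x y ^ 2 = ∑ x, P x * nu W x := by
  refine Finset.sum_congr rfl fun x _ => ?_
  by_cases hx : P x = 0
  · simp [hx]
  congr 1
  have h : ∑ y, W x y * centDens W x y ^ 2 = ∑ y, W x y * iStar W x y ^ 2
      - 2 * capacity W * ∑ y, W x y * iStar W x y + capacity W ^ 2 * ∑ y, W x y := by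
    rw [Finset.mul_sum, Finset.mul_sum, ← Finset.sum_sub_distrib, ← Finset.sum_add_distrib]
    exact Finset.sum_congr rfl fun y _ => by simp only [centDens]; ring
  rw [h, nu, sum_mul_iStar_eq hW hcol hP x hx, (hW x).2]
  ring

/-- Law of the output string when the feedback encoder `f` is used over the channel `W`. -/
def pathLaw (W : X → Y → ℝ) {n : ℕ} (f : List Y → X) (y : Fin n → Y) : ℝ :=
  ∏ k : Fin n, W (f ((List.ofFn y).take (k : ℕ))) (y k)

/-- Accumulated score of the output string when the feedback encoder `f` is used. -/
def pathSum (j : X → Y → ℝ) {n : ℕ} (f : List Y → X) (y : Fin n → Y) : ℝ :=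
  ∑ k : Fin n, j (f ((List.ofFn y).take (k : ℕ))) (y k)

lemma pathLaw_cons {X Y : Type*} (W : X → Y → ℝ) {n : ℕ} (f : List Y → X) (a : Y) (y : Fin n → Y) :
    pathLaw W f (Fin.cons a y : Fin (n + 1) → Y)
      = W (f []) a * pathLaw W (fun l => f (a :: l)) y := by
  simp [pathLaw, Fin.prod_univ_succ, List.ofFn_succ]

lemma pathSum_cons {X Y : Type*} (j : X → Y → ℝ) {n : ℕ} (f : List Y → X) (a : Y) (y : Fin n → Y) :
    pathSum j f (Fin.cons a y : Fin (n + 1) → Y)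
      = j (f []) a + pathSum j (fun l => f (a :: l)) y := by
  simp [pathSum, Fin.sum_univ_succ, List.ofFn_succ]

lemma sum_cons {n : ℕ} (g : (Fin (n + 1) → Y) → ℝ) :
    ∑ y, g y = ∑ a, ∑ y : Fin n → Y, g (Fin.cons a y) := by
  rw [← (Fin.consEquiv (fun _ => Y)).sum_comp, Fintype.sum_prod_type]
  rfl

lemma pathLaw_nonneg {X : Type*} {W : X → Y → ℝ} (hW : IsChannel W) {n : ℕ} (f : List Y → X)
    (y : Fin n → Y) : 0 ≤ pathLaw W f y :=
  Finset.prod_nonneg fun _ _ => (hW _).1 _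

lemma sum_pathLaw {X : Type*} {W : X → Y → ℝ} (hW : IsChannel W) (n : ℕ) :
    ∀ f : List Y → X, ∑ y : Fin n → Y, pathLaw W f y = 1 := by
  induction n with
  | zero => intro f; simp [pathLaw]
  | succ n ih =>
    intro f
    rw [sum_cons]
    simp_rw [pathLaw_cons, ← Finset.mul_sum, ih, mul_one]
    exact (hW _).2

lemma sum_prod_eq_one {q : Y → ℝ} (hq : ∑ y, q y = 1) (n : ℕ) :
    ∑ y : Fin n → Y, ∏ k, q (y k) = 1 := by
  rw [← Fintype.sum_pow, hq, one_pow]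

/-- A deterministic feedback encoder does at least as well as a randomised controller whose
cost is dominated by the supersolution `U`. -/
lemma exists_encoder {W : X → Y → ℝ} (hW : IsChannel W) {q : Y → ℝ} {j : X → Y → ℝ} {L : ℝ}
    {U : ℕ → ℝ → ℝ} (hU0 : ∀ s, (if s ≤ L then (1 : ℝ) else 0) ≤ U 0 s)
    (hU : ∀ k s, ∃ P : X → ℝ, IsDist P ∧ outDist P W = q ∧
      ∑ x, P x * ∑ y, W x y * U k (s + j x y) ≤ U (k + 1) s) (n : ℕ) :
    ∀ (s : ℝ) (d : (Fin n → Y) → ℝ), ∃ f : List Y → X,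
      1 - U n s - ∑ y : Fin n → Y, (∏ k, q (y k)) * d y
        ≤ ∑ y : Fin n → Y,
          pathLaw W f y * ((if L < s + pathSum j f y then (1 : ℝ) else 0) - d y) := by
  have hX : ∀ P : X → ℝ, IsDist P → Nonempty X := by
    intro P hP
    by_contra h
    rw [not_nonempty_iff] at h
    have := hP.2
    simp at this
  induction n with
  | zero =>
    intro s d
    obtain ⟨P, hP, -⟩ := hU 0 s
    obtain ⟨x⟩ := hX P hP
    refine ⟨fun _ => x, ?_⟩
    have := hU0 s
    simp only [Finset.univ_unique, Finset.sum_singleton, pathLaw, pathSum, Finset.univ_eq_empty,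
      Finset.prod_empty, Finset.sum_empty, one_mul, add_zero]
    by_cases h : s ≤ L
    · rw [if_pos h] at this
      rw [if_neg (not_lt.2 h)]
      linarith
    · rw [if_neg h] at this
      rw [if_pos (not_le.1 h)]
      linarith
  | succ n ih =>
    intro s d
    obtain ⟨P, hP, hPq, hPU⟩ := hU n s
    have := hX P hP
    choose f hf using fun (x : X) (a : Y) => ih (s + j x a) (fun y => d (Fin.cons a y))
    set v : X → ℝ := fun x => ∑ a, W x a * (1 - U n (s + j x a)
      - ∑ y : Fin n → Y, (∏ k, q (y k)) * d (Fin.cons a y)) with hv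
    obtain ⟨x, -, hx⟩ := Finset.exists_max_image Finset.univ v Finset.univ_nonempty
    have havg : ∑ x', P x' * v x' ≤ v x := by
      calc ∑ x', P x' * v x' ≤ ∑ x', P x' * v x :=
            Finset.sum_le_sum fun x' hx' => mul_le_mul_of_nonneg_left (hx x' hx') (hP.1 x')
        _ = v x := by rw [← Finset.sum_mul, hP.2, one_mul]
    have hsum : ∑ x', P x' * v x' = 1 - ∑ x, P x * ∑ y, W x y * U n (s + j x y)
        - ∑ y : Fin (n + 1) → Y, (∏ k, q (y k)) * d y := by
      have h1 : ∀ x', v x' = 1 - ∑ a, W x' a * U n (s + j x' a)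
          - ∑ a, W x' a * ∑ y : Fin n → Y, (∏ k, q (y k)) * d (Fin.cons a y) := by
        intro x'
        simp only [hv, mul_sub, Finset.sum_sub_distrib, mul_one, (hW x').2]
      have h2 : ∑ x', P x' * ∑ a, W x' a * ∑ y : Fin n → Y, (∏ k, q (y k)) * d (Fin.cons a y)
          = ∑ y : Fin (n + 1) → Y, (∏ k, q (y k)) * d y := by
        rw [sum_cons]
        simp_rw [Finset.mul_sum (s := (Finset.univ : Finset Y))]
        rw [Finset.sum_comm]
        refine Finset.sum_congr rfl fun a _ => ?_
        simp_rw [← mul_assoc]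
        rw [← Finset.sum_mul, Finset.mul_sum]
        refine Finset.sum_congr rfl fun y _ => ?_
        rw [Fin.prod_univ_succ]
        simp only [Fin.cons_zero, Fin.cons_succ, ← hPq, outDist]
        ring
      simp_rw [h1, mul_sub]
      rw [Finset.sum_sub_distrib, Finset.sum_sub_distrib, h2]
      simp_rw [mul_one]
      rw [hP.2]
    refine ⟨fun l => match l with
      | [] => x
      | a :: l => f x a l, ?_⟩
    have hle : 1 - U (n + 1) s - ∑ y : Fin (n + 1) → Y, (∏ k, q (y k)) * d y ≤ v x := by
      linarith
    refine hle.trans ?_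
    rw [sum_cons]
    refine Finset.sum_le_sum fun a _ => ?_
    simp_rw [pathLaw_cons, pathSum_cons, mul_assoc, ← Finset.mul_sum, ← add_assoc]
    exact mul_le_mul_of_nonneg_left (hf x a) ((hW x).1 a)

/-- Change of measure from the channel output law to the product law of `q*`. -/
lemma pathLaw_eq {W : X → Y → ℝ} (hW : IsChannel W) (hq : ∀ y, 0 < qStar W y) {n : ℕ}
    (f : List Y → X) (y : Fin n → Y) (h : pathLaw W f y ≠ 0) :
    pathLaw W f y = Real.exp (n * capacity W + pathSum (centDens W) f y)
      * ∏ k, qStar W (y k) := by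
  have h1 : n * capacity W + pathSum (centDens W) f y
      = ∑ k : Fin n, iStar W (f ((List.ofFn y).take (k : ℕ))) (y k) := by
    simp [pathSum, centDens, Finset.sum_sub_distrib]
  rw [h1, Real.exp_sum, ← Finset.prod_mul_distrib, pathLaw]
  refine Finset.prod_congr rfl fun k _ => ?_
  have hk : W (f ((List.ofFn y).take (k : ℕ))) (y k) ≠ 0 :=
    Finset.prod_ne_zero_iff.1 h k (Finset.mem_univ k)
  have hk' := lt_of_le_of_ne ((hW _).1 _) hk.symm
  rw [iStar, Real.exp_log (div_pos hk' (hq _))]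
  have := (hq (y k)).ne'
  field_simp

/-- Greedy (Feinstein-type) construction of feedback codes. -/
lemma exists_codebook {W : X → Y → ℝ} (hW : IsChannel W) (hq : ∀ y, 0 < qStar W y) {L ε : ℝ}
    {U : ℕ → ℝ → ℝ} (hU0 : ∀ s, (if s ≤ L then (1 : ℝ) else 0) ≤ U 0 s)
    (hU : ∀ k s, ∃ P : X → ℝ, IsDist P ∧ outDist P W = qStar W ∧
      ∑ x, P x * ∑ y, W x y * U k (s + centDens W x y) ≤ U (k + 1) s) (n M : ℕ)
    (hM : (M : ℝ) ≤ Real.exp (n * capacity W + L) * (ε - U n 0)) :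
    ∃ (f : Fin M → List Y → X) (D : Fin M → Finset (Fin n → Y)),
      Pairwise (fun i i' => Disjoint (D i) (D i')) ∧
      (∀ i, 1 - ε ≤ ∑ y ∈ D i, pathLaw W (f i) y) ∧
      ∀ i, ∑ y ∈ D i, ∏ k, qStar W (y k) ≤ Real.exp (-(n * capacity W + L)) := by
  induction M with
  | zero => exact ⟨fun i => i.elim0, fun i => i.elim0, fun i => i.elim0, fun i => i.elim0,
      fun i => i.elim0⟩
  | succ M ih =>
    push_cast at hM
    obtain ⟨f, D, hdis, hlaw, hqD⟩ := ih (by linarith)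
    set E : Finset (Fin n → Y) := Finset.univ.biUnion D with hE
    obtain ⟨g, hg⟩ := exists_encoder hW hU0 hU n 0 (fun y => if y ∈ E then 1 else 0)
    set G : Finset (Fin n → Y) := Finset.univ.filter fun y =>
      y ∉ E ∧ L < pathSum (centDens W) g y ∧ pathLaw W g y ≠ 0 with hG
    have hexp : Real.exp (n * capacity W + L) * Real.exp (-(n * capacity W + L)) = 1 := by
      rw [← Real.exp_add]
      simp
    have hQE : ∑ y : Fin n → Y, (∏ k, qStar W (y k)) * (if y ∈ E then (1 : ℝ) else 0)
        ≤ M * Real.exp (-(n * capacity W + L)) := by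
      simp only [mul_ite, mul_one, mul_zero, Finset.sum_ite_mem, Finset.univ_inter]
      rw [hE, Finset.sum_biUnion fun i _ i' _ h => hdis h]
      calc _ ≤ ∑ _i : Fin M, Real.exp (-(n * capacity W + L)) :=
            Finset.sum_le_sum fun i _ => hqD i
        _ = _ := by simp
    have hME : U n 0 + M * Real.exp (-(n * capacity W + L)) ≤ ε := by
      have h1 : (M : ℝ) ≤ Real.exp (n * capacity W + L) * (ε - U n 0) := by linarith
      have h2 := mul_le_mul_of_nonneg_right h1 (Real.exp_pos (-(n * capacity W + L))).le
      have h3 : Real.exp (n * capacity W + L) * (ε - U n 0)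
          * Real.exp (-(n * capacity W + L)) = ε - U n 0 := by
        rw [mul_right_comm, hexp, one_mul]
      linarith
    have hGlaw : 1 - ε ≤ ∑ y ∈ G, pathLaw W g y := by
      have h1 : ∑ y : Fin n → Y, pathLaw W g y * ((if L < 0 + pathSum (centDens W) g y
          then (1 : ℝ) else 0) - if y ∈ E then 1 else 0) ≤ ∑ y ∈ G, pathLaw W g y := by
        rw [hG, Finset.sum_filter]
        refine Finset.sum_le_sum fun y _ => ?_
        have h0 := pathLaw_nonneg hW g y
        rw [zero_add]
        by_cases hz : pathLaw W g y = 0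
        · simp [hz]
        by_cases hy : y ∈ E <;> by_cases hL : L < pathSum (centDens W) g y <;>
          simp [hy, hL, hz, h0]
      linarith
    have hGq : ∑ y ∈ G, ∏ k, qStar W (y k) ≤ Real.exp (-(n * capacity W + L)) := by
      have h1 : ∀ y ∈ G, ∏ k, qStar W (y k)
          ≤ Real.exp (-(n * capacity W + L)) * pathLaw W g y := by
        intro y hy
        rw [hG, Finset.mem_filter] at hy
        obtain ⟨-, -, hL, h0⟩ := hy
        rw [pathLaw_eq hW hq g y h0, ← mul_assoc, ← Real.exp_add]
        refine le_mul_of_one_le_left (Finset.prod_nonneg fun k _ => (hq _).le) ?_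
        exact Real.one_le_exp (by linarith)
      calc _ ≤ ∑ y ∈ G, Real.exp (-(n * capacity W + L)) * pathLaw W g y := Finset.sum_le_sum h1
        _ ≤ Real.exp (-(n * capacity W + L)) * 1 := by
          rw [← Finset.mul_sum, ← sum_pathLaw hW n g]
          exact mul_le_mul_of_nonneg_left (Finset.sum_le_sum_of_subset_of_nonneg
            (Finset.subset_univ _) fun y _ _ => pathLaw_nonneg hW g y) (Real.exp_pos _).le
        _ = _ := mul_one _
    have hGD : ∀ i, Disjoint (D i) G := by
      intro i
      rw [Finset.disjoint_left]
      intro y hy hyG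
      rw [hG, Finset.mem_filter] at hyG
      exact hyG.2.1 (Finset.mem_biUnion.2 ⟨i, Finset.mem_univ i, hy⟩)
    refine ⟨Fin.snoc (α := fun _ => List Y → X) f g,
      Fin.snoc (α := fun _ => Finset (Fin n → Y)) D G, ?_, ?_, ?_⟩
    · intro i i'
      induction i using Fin.lastCases with
      | last =>
        induction i' using Fin.lastCases with
        | last => simp
        | cast i' => intro _; simpa using (hGD i').symm
      | cast i =>
        induction i' using Fin.lastCases with
        | last => intro _; simpa using hGD i
        | cast i' =>
          intro h
          simpa using hdis (fun h' => h (by rw [h']))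
    · intro i
      induction i using Fin.lastCases with
      | last => simpa using hGlaw
      | cast i => simpa using hlaw i
    · intro i
      induction i using Fin.lastCases with
      | last => simpa using hGq
      | cast i => simpa using hqD i

lemma errProb_nonneg {X : Type*} {W : X → Y → ℝ} (hW : IsChannel W) {n M : ℕ}
    (enc : Fin M → List Y → X) (dec : (Fin n → Y) → Fin M) : 0 ≤ errProb W n M enc dec := by
  unfold errProb
  refine mul_nonneg (by positivity) (Finset.sum_nonneg fun m _ => Finset.sum_nonneg fun y _ => ?_)
  refine mul_nonneg (pathLaw_nonneg hW (enc m) y) ?_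
  split_ifs <;> norm_num

lemma exists_errProb_le {X : Type*} {W : X → Y → ℝ} (hW : IsChannel W) {ε : ℝ} {n M : ℕ}
    (hM : 0 < M) (f : Fin M → List Y → X) (D : Fin M → Finset (Fin n → Y))
    (hdis : Pairwise (fun i i' => Disjoint (D i) (D i')))
    (hlaw : ∀ i, 1 - ε ≤ ∑ y ∈ D i, pathLaw W (f i) y) :
    ∃ dec, errProb W n M f dec ≤ ε := by
  refine ⟨fun y => if h : ∃ i, y ∈ D i then h.choose else ⟨0, hM⟩, ?_⟩
  set dec : (Fin n → Y) → Fin M := fun y => if h : ∃ i, y ∈ D i then h.choose else ⟨0, hM⟩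
    with hdec
  have hd : ∀ m, ∀ y ∈ D m, dec y = m := by
    intro m y hy
    have h : ∃ i, y ∈ D i := ⟨m, hy⟩
    simp only [hdec, dif_pos h]
    by_contra hne
    exact Finset.disjoint_left.1 (hdis hne) h.choose_spec hy
  have hm : ∀ m, ∑ y : Fin n → Y, pathLaw W (f m) y * (if dec y = m then 0 else 1) ≤ ε := by
    intro m
    have h1 : ∑ y : Fin n → Y, pathLaw W (f m) y * (if dec y = m then 0 else 1)
        ≤ ∑ y : Fin n → Y, (pathLaw W (f m) y - if y ∈ D m then pathLaw W (f m) y else 0) := by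
      refine Finset.sum_le_sum fun y _ => ?_
      have h0 := pathLaw_nonneg hW (f m) y
      by_cases hy : y ∈ D m
      · simp [hy, hd m y hy]
      · by_cases h : dec y = m <;> simp [hy, h, h0]
    rw [Finset.sum_sub_distrib, sum_pathLaw hW, Finset.sum_ite_mem, Finset.univ_inter] at h1
    linarith [hlaw m]
  have hM' : (0 : ℝ) < M := by exact_mod_cast hM
  calc errProb W n M f dec ≤ (M : ℝ)⁻¹ * ∑ _m : Fin M, ε :=
        mul_le_mul_of_nonneg_left (Finset.sum_le_sum fun m _ => hm m) (by positivity)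
    _ = ε := by simp; field_simp

lemma minErr_le {X : Type*} {W : X → Y → ℝ} (hW : IsChannel W) {n M : ℕ} {R : ℝ}
    (hR : ⌈Real.exp (n * R)⌉₊ = M) (enc : Fin M → List Y → X) (dec : (Fin n → Y) → Fin M) :
    minErr W n R ≤ errProb W n M enc dec := by
  subst hR
  refine csInf_le ⟨0, ?_⟩ ⟨enc, dec, rfl⟩
  rintro e ⟨enc, dec, rfl⟩
  exact errProb_nonneg hW enc dec

lemma mem_Mfb_set {X : Type*} {W : X → Y → ℝ} (hW : IsChannel W) {ε : ℝ} {n M : ℕ} (hn : 0 < n)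
    (hM : 0 < M) (f : Fin M → List Y → X) (dec : (Fin n → Y) → Fin M)
    (h : errProb W n M f dec ≤ ε) :
    (M : ℝ) ∈ {m | ∃ R : ℝ, m = (⌈Real.exp (n * R)⌉₊ : ℝ) ∧ minErr W n R ≤ ε} := by
  have hM' : (0 : ℝ) < M := by exact_mod_cast hM
  have hn' : (0 : ℝ) < n := by exact_mod_cast hn
  have hR : ⌈Real.exp (n * (Real.log M / n))⌉₊ = M := by
    rw [mul_div_cancel₀ _ hn'.ne', Real.exp_log hM', Nat.ceil_natCast]
  exact ⟨Real.log M / n, by rw [hR], (minErr_le hW hR f dec).trans h⟩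

/-- Exponential moment bound for the accumulated score of any feedback encoder. -/
lemma sum_pathLaw_mul_exp_le {X : Type*} {W : X → Y → ℝ} (hW : IsChannel W) {j : X → Y → ℝ}
    {b θ : ℝ} (hb : ∀ x y, |j x y| ≤ b) (hj : ∀ x, ∑ y, W x y * j x y ≤ 0) (h0 : 0 ≤ θ)
    (hθ : θ * b ≤ 1) (n : ℕ) : ∀ f : List Y → X,
    ∑ y : Fin n → Y, pathLaw W f y * Real.exp (θ * pathSum j f y)
      ≤ Real.exp (n * (θ * b) ^ 2) := by
  induction n with
  | zero => intro f; simp [pathLaw, pathSum]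
  | succ n ih =>
    intro f
    rw [sum_cons]
    simp_rw [pathLaw_cons, pathSum_cons, mul_add, Real.exp_add]
    have h1 : ∀ a, ∑ y : Fin n → Y, W (f []) a * pathLaw W (fun l => f (a :: l)) y *
        (Real.exp (θ * j (f []) a) * Real.exp (θ * pathSum j (fun l => f (a :: l)) y))
        ≤ W (f []) a * (1 + θ * j (f []) a + (θ * b) ^ 2) * Real.exp (n * (θ * b) ^ 2) := by
      intro a
      have h2 : |θ * j (f []) a| ≤ θ * b := by
        rw [abs_mul, abs_of_nonneg h0]
        exact mul_le_mul_of_nonneg_left (hb _ _) h0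
      have h3 : Real.exp (θ * j (f []) a) ≤ 1 + θ * j (f []) a + (θ * b) ^ 2 := by
        have h4 := (abs_le.1 (Real.abs_exp_sub_one_sub_id_le (h2.trans hθ))).2
        have h5 : (θ * j (f []) a) ^ 2 ≤ (θ * b) ^ 2 := sq_le_sq' (abs_le.1 h2).1 (abs_le.1 h2).2
        linarith
      calc _ = W (f []) a * Real.exp (θ * j (f []) a) * ∑ y : Fin n → Y,
            pathLaw W (fun l => f (a :: l)) y *
              Real.exp (θ * pathSum j (fun l => f (a :: l)) y) := by
            rw [Finset.mul_sum]
            exact Finset.sum_congr rfl fun y _ => by ring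
        _ ≤ _ := by
            have h8 := (hW (f [])).1 a
            refine mul_le_mul (mul_le_mul_of_nonneg_left h3 h8) (ih _) ?_
              (mul_nonneg h8 ((Real.exp_pos _).le.trans h3))
            exact Finset.sum_nonneg fun y _ =>
              mul_nonneg (pathLaw_nonneg hW _ y) (Real.exp_pos _).le
    refine (Finset.sum_le_sum fun a _ => h1 a).trans ?_
    rw [← Finset.sum_mul]
    have h6 : ∑ a, W (f []) a * (1 + θ * j (f []) a + (θ * b) ^ 2)
        = 1 + θ * ∑ a, W (f []) a * j (f []) a + (θ * b) ^ 2 := by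
      simp only [mul_add, Finset.sum_add_distrib, ← Finset.sum_mul, mul_one, (hW (f [])).2,
        Finset.mul_sum, one_mul]
      congr 2
      exact Finset.sum_congr rfl fun a _ => by ring
    have h7 : ∑ a, W (f []) a * (1 + θ * j (f []) a + (θ * b) ^ 2)
        ≤ Real.exp ((θ * b) ^ 2) := by
      rw [h6]
      have := Real.add_one_le_exp ((θ * b) ^ 2)
      nlinarith [hj (f [])]
    calc _ ≤ Real.exp ((θ * b) ^ 2) * Real.exp (n * (θ * b) ^ 2) :=
          mul_le_mul_of_nonneg_right h7 (Real.exp_pos _).le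
      _ = _ := by
        rw [← Real.exp_add]
        push_cast
        ring_nf

/-- Non-asymptotic converse for feedback codes. -/
lemma le_errProb {W : X → Y → ℝ} (hW : IsChannel W) (hq : ∀ y, 0 < qStar W y)
    (hq1 : ∑ y, qStar W y = 1) {b θ : ℝ} (hb : ∀ x y, |centDens W x y| ≤ b)
    (hj : ∀ x, ∑ y, W x y * centDens W x y ≤ 0) (h0 : 0 ≤ θ) (hθ : θ * b ≤ 1) (L : ℝ)
    {n M : ℕ} (hM : 0 < M) (f : Fin M → List Y → X) (dec : (Fin n → Y) → Fin M) :
    1 - Real.exp (n * (θ * b) ^ 2 - θ * L) - Real.exp (n * capacity W + L) / M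
      ≤ errProb W n M f dec := by
  have hM' : (0 : ℝ) < M := by exact_mod_cast hM
  have h1 : ∀ m, ∀ y : Fin n → Y, pathLaw W (f m) y - pathLaw W (f m) y *
      (if dec y = m then 0 else 1) ≤ Real.exp (-(θ * L)) *
        (pathLaw W (f m) y * Real.exp (θ * pathSum (centDens W) (f m) y))
      + Real.exp (n * capacity W + L) * ((∏ k, qStar W (y k)) * if dec y = m then 1 else 0) := by
    intro m y
    have hn := pathLaw_nonneg hW (f m) y
    have hQ : 0 ≤ ∏ k, qStar W (y k) := Finset.prod_nonneg fun k _ => (hq _).le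
    have hA : 0 ≤ Real.exp (-(θ * L)) *
        (pathLaw W (f m) y * Real.exp (θ * pathSum (centDens W) (f m) y)) := by positivity
    by_cases hd : dec y = m
    · simp only [hd, if_true, mul_zero, sub_zero, mul_one]
      by_cases hz : pathLaw W (f m) y = 0
      · rw [hz]
        simp only [zero_mul, mul_zero, zero_add]
        positivity
      rcases lt_or_ge L (pathSum (centDens W) (f m) y) with hL | hL
      · have h2 : pathLaw W (f m) y ≤ Real.exp (-(θ * L)) *
            (pathLaw W (f m) y * Real.exp (θ * pathSum (centDens W) (f m) y)) := by
          rw [mul_left_comm, ← Real.exp_add]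
          refine le_mul_of_one_le_right hn (Real.one_le_exp ?_)
          nlinarith
        have : 0 ≤ Real.exp (n * capacity W + L) * ∏ k, qStar W (y k) := by positivity
        linarith
      · have h2 : pathLaw W (f m) y ≤ Real.exp (n * capacity W + L) * ∏ k, qStar W (y k) := by
          rw [pathLaw_eq hW hq (f m) y hz]
          gcongr
        linarith
    · simp only [hd, if_false, mul_one, mul_zero, sub_self, add_zero]
      exact hA
  have h2 : ∑ m, ∑ y : Fin n → Y, (pathLaw W (f m) y - pathLaw W (f m) y *
      (if dec y = m then 0 else 1)) ≤ M * Real.exp (n * (θ * b) ^ 2 - θ * L)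
      + Real.exp (n * capacity W + L) := by
    refine (Finset.sum_le_sum fun m _ => Finset.sum_le_sum fun y _ => h1 m y).trans ?_
    simp_rw [Finset.sum_add_distrib, ← Finset.mul_sum]
    refine add_le_add ?_ ?_
    · rw [sub_eq_neg_add, Real.exp_add, mul_left_comm]
      refine mul_le_mul_of_nonneg_left ?_ (Real.exp_pos _).le
      refine (Finset.sum_le_sum fun m _ =>
        sum_pathLaw_mul_exp_le hW hb hj h0 hθ n (f m)).trans ?_
      simp
    · rw [Finset.sum_comm]
      simp [sum_prod_eq_one hq1]
  have h3 : ∑ m, ∑ y : Fin n → Y, (pathLaw W (f m) y - pathLaw W (f m) y *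
      (if dec y = m then 0 else 1)) = M - M * errProb W n M f dec := by
    have h4 : M * errProb W n M f dec = ∑ m, ∑ y : Fin n → Y, pathLaw W (f m) y *
        (if dec y = m then 0 else 1) := by
      unfold errProb
      rw [mul_inv_cancel_left₀ hM'.ne']
      rfl
    rw [h4]
    simp [Finset.sum_sub_distrib, sum_pathLaw hW]
  rw [h3] at h2
  have h5 : M * (1 - Real.exp (n * (θ * b) ^ 2 - θ * L) - Real.exp (n * capacity W + L) / M)
      ≤ M * errProb W n M f dec := by
    rw [mul_sub, mul_sub, mul_div_cancel₀ _ hM'.ne']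
    linarith
  exact le_of_mul_le_mul_left h5 hM'

lemma gpdf_eq : gpdf = ProbabilityTheory.gaussianPDFReal 0 1 := by
  funext u
  simp [gpdf, ProbabilityTheory.gaussianPDFReal]

lemma gpdf_pos (u : ℝ) : 0 < gpdf u := by
  unfold gpdf
  positivity

lemma continuous_gpdf : Continuous gpdf := by
  unfold gpdf
  fun_prop

lemma integrable_gpdf : Integrable gpdf := by
  rw [gpdf_eq]
  exact ProbabilityTheory.integrable_gaussianPDFReal 0 1

lemma gcdf_eq_cdf : gcdf = ProbabilityTheory.cdf (ProbabilityTheory.gaussianReal 0 1) := by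
  funext t
  rw [ProbabilityTheory.cdf_eq_real, measureReal_def,
    ProbabilityTheory.gaussianReal_apply_eq_integral _ (by norm_num), ENNReal.toReal_ofReal, gcdf,
    gpdf_eq]
  exact integral_nonneg fun x => ProbabilityTheory.gaussianPDFReal_nonneg _ _ _

lemma tendsto_gcdf_atTop : Tendsto gcdf atTop (nhds 1) := by
  rw [gcdf_eq_cdf]
  exact ProbabilityTheory.tendsto_cdf_atTop _

lemma tendsto_gcdf_atBot : Tendsto gcdf atBot (nhds 0) := by
  rw [gcdf_eq_cdf]
  exact ProbabilityTheory.tendsto_cdf_atBot _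

lemma gcdf_le_one (t : ℝ) : gcdf t ≤ 1 := by
  rw [gcdf_eq_cdf]
  exact ProbabilityTheory.cdf_le_one _ _

lemma hasDerivAt_gcdf (t : ℝ) : HasDerivAt gcdf (gpdf t) t := by
  have h : gcdf = fun t => gcdf 0 + ∫ u in (0 : ℝ)..t, gpdf u := by
    funext t
    rw [← intervalIntegral.integral_Iic_sub_Iic integrable_gpdf.integrableOn
      integrable_gpdf.integrableOn]
    simp only [gcdf]
    ring
  rw [h]
  exact (intervalIntegral.integral_hasDerivAt_right
    (continuous_gpdf.intervalIntegrable _ _)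
    (continuous_gpdf.stronglyMeasurableAtFilter _ _) continuous_gpdf.continuousAt).const_add _

lemma continuous_gcdf : Continuous gcdf :=
  continuous_iff_continuousAt.2 fun t => (hasDerivAt_gcdf t).continuousAt

lemma gcdf_neg (t : ℝ) : gcdf (-t) = 1 - gcdf t := by
  have h1 : ∫ u, gpdf u = 1 := by
    rw [gpdf_eq]
    exact ProbabilityTheory.integral_gaussianPDFReal_eq_one 0 (by norm_num)
  have h2 : gcdf t + ∫ u in Set.Ioi t, gpdf u = 1 := by
    rw [← h1, gcdf]
    exact intervalIntegral.integral_Iic_add_Ioi integrable_gpdf.integrableOn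
      integrable_gpdf.integrableOn
  have h3 : gcdf (-t) = ∫ u in Set.Ioi t, gpdf u := by
    have := integral_comp_neg_Iic (-t) gpdf
    rw [neg_neg] at this
    rw [← this, gcdf]
    simp [gpdf]
  linarith

lemma gcdf_zero : gcdf 0 = 1 / 2 := by
  have := gcdf_neg 0
  rw [neg_zero] at this
  linarith

lemma strictMono_gcdf : StrictMono gcdf :=
  strictMono_of_deriv_pos fun t => by
    rw [(hasDerivAt_gcdf t).deriv]
    exact gpdf_pos t

lemma gcdf_gcdfInv {p : ℝ} (h0 : 0 < p) (h1 : p < 1) : gcdf (gcdfInv p) = p := by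
  refine Function.invFun_eq ?_
  exact mem_range_of_exists_le_of_exists_ge continuous_gcdf
    ((tendsto_gcdf_atBot.eventually (eventually_le_nhds h0)).exists)
    ((tendsto_gcdf_atTop.eventually (eventually_ge_nhds h1)).exists)

lemma hasDerivAt_gpdf (x : ℝ) : HasDerivAt gpdf (-(x * gpdf x)) x := by
  have h : HasDerivAt (fun u : ℝ => -u ^ 2 / 2) (-x) x := by
    refine (((hasDerivAt_pow 2 x).neg).div_const 2).congr_deriv ?_
    norm_num
    ring
  refine ((h.exp).const_mul ((Real.sqrt (2 * Real.pi))⁻¹)).congr_deriv ?_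
  simp only [gpdf]
  ring

lemma gpdf_mul_le (x : ℝ) : gpdf x * (1 + x ^ 2 / 2 + x ^ 4 / 8) ≤ 1 := by
  have h1 : (Real.sqrt (2 * Real.pi))⁻¹ ≤ 1 := by
    refine inv_le_one_of_one_le₀ (Real.one_le_sqrt.2 ?_)
    linarith [Real.pi_gt_three]
  have h2 : 1 + x ^ 2 / 2 + x ^ 4 / 8 ≤ Real.exp (x ^ 2 / 2) := by
    have := Real.quadratic_le_exp_of_nonneg (show 0 ≤ x ^ 2 / 2 by positivity)
    linarith [show (x ^ 2 / 2) ^ 2 / 2 = x ^ 4 / 8 by ring]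
  have h3 : gpdf x ≤ Real.exp (-x ^ 2 / 2) :=
    mul_le_of_le_one_left (Real.exp_pos _).le h1
  calc gpdf x * (1 + x ^ 2 / 2 + x ^ 4 / 8)
      ≤ Real.exp (-x ^ 2 / 2) * Real.exp (x ^ 2 / 2) := by gcongr
    _ = 1 := by
      rw [← Real.exp_add]
      ring_nf
      simp

lemma abs_mul_gpdf_le (x : ℝ) : |x * gpdf x| ≤ 1 := by
  have h := gpdf_mul_le x
  have h0 := gpdf_pos x
  have h1 : |x| ≤ 1 + x ^ 2 / 2 + x ^ 4 / 8 := by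
    have : 0 ≤ x ^ 4 := by positivity
    rw [abs_le]
    constructor <;> nlinarith [sq_nonneg (x - 1), sq_nonneg (x + 1)]
  rw [abs_mul, abs_of_pos h0, mul_comm]
  exact (mul_le_mul_of_nonneg_left h1 h0.le).trans h

lemma abs_pow_three_mul_gpdf_le (x : ℝ) : |x ^ 3 * gpdf x| ≤ 5 := by
  have h := gpdf_mul_le x
  have h0 := gpdf_pos x
  have h1 : |x ^ 3| ≤ 5 * (1 + x ^ 2 / 2 + x ^ 4 / 8) := by
    rw [abs_le]
    constructor <;> nlinarith [sq_nonneg (x * (x - 1)), sq_nonneg (x * (x + 1)), sq_nonneg x,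
      sq_nonneg (x ^ 2)]
  rw [abs_mul, abs_of_pos h0, mul_comm]
  have := mul_le_mul_of_nonneg_left h1 h0.le
  linarith

lemma abs_sq_sub_one_mul_gpdf_le (x : ℝ) : |(1 - x ^ 2) * gpdf x| ≤ 3 := by
  have h := gpdf_mul_le x
  have h0 := gpdf_pos x
  have h1 : |1 - x ^ 2| ≤ 3 * (1 + x ^ 2 / 2 + x ^ 4 / 8) := by
    have : 0 ≤ x ^ 4 := by positivity
    rw [abs_le]
    constructor <;> nlinarith [sq_nonneg x]
  rw [abs_mul, abs_of_pos h0, mul_comm]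
  have := mul_le_mul_of_nonneg_left h1 h0.le
  linarith

/-- First-order Taylor bound from a Lipschitz-type bound on the derivative at the base point. -/
lemma taylor_one_of_deriv_le {F G : ℝ → ℝ} {z w K : ℝ}
    (hF : ∀ u ∈ Set.uIcc z w, HasDerivAt F (G u) u)
    (hG : ∀ u ∈ Set.uIcc z w, |G u - G z| ≤ K) :
    |F w - F z - G z * (w - z)| ≤ K * |w - z| := by
  have h := Convex.norm_image_sub_le_of_norm_hasDerivWithin_le (s := Set.uIcc z w)
    (f := fun u => F u - G z * u) (f' := fun u => G u - G z) (C := K) (x := z) (y := w)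
    (fun u hu => by
      refine (((hF u hu).sub ((hasDerivAt_id u).const_mul (G z))).congr_deriv ?_).hasDerivWithinAt
      simp)
    (fun u hu => by simpa using hG u hu) (convex_uIcc z w) Set.left_mem_uIcc Set.right_mem_uIcc
  rw [Real.norm_eq_abs, Real.norm_eq_abs] at h
  convert h using 2
  ring

lemma abs_sub_le_of_mem_uIcc {z w u : ℝ} (hu : u ∈ Set.uIcc z w) : |u - z| ≤ |w - z| :=
  Set.abs_sub_left_of_mem_uIcc hu

/-- Second-order Taylor bound for a function with Lipschitz second derivative. -/
lemma taylor_two_of_lipschitz {F G H : ℝ → ℝ} {K : ℝ} (hK : 0 ≤ K)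
    (hF : ∀ u, HasDerivAt F (G u) u)
    (hG : ∀ u, HasDerivAt G (H u) u) (hH : ∀ u v, |H u - H v| ≤ K * |u - v|) (z w : ℝ) :
    F (z + w) ≤ F z + G z * w + H z * w ^ 2 / 2 + K * |w| ^ 3 := by
  have h1 : ∀ u, |G u - G z - H z * (u - z)| ≤ K * |u - z| * |u - z| := fun u =>
    taylor_one_of_deriv_le (fun v _ => hG v) fun v hv =>
      (hH v z).trans (mul_le_mul_of_nonneg_left (abs_sub_le_of_mem_uIcc hv) hK)
  have h2 := taylor_one_of_deriv_le (F := fun u => F u - H z * (u - z) ^ 2 / 2)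
    (G := fun u => G u - H z * (u - z)) (z := z) (w := z + w) (K := K * |w| * |w|)
    (fun u _ => by
      have h3 := (((hasDerivAt_id u).sub_const z).pow 2).const_mul (H z)
      refine ((hF u).sub (h3.div_const 2)).congr_deriv ?_
      simp only [id]
      ring)
    (fun u hu => by
      have h5 := abs_sub_le_of_mem_uIcc hu
      rw [add_sub_cancel_left] at h5
      have h6 := h1 u
      simp only [sub_self, mul_zero, sub_zero]
      rw [show G u - H z * (u - z) - G z = G u - G z - H z * (u - z) by ring]
      refine h6.trans ?_
      gcongr)
  have h3 := (abs_le.1 h2).2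
  simp only [add_sub_cancel_left, sub_self, mul_zero, sub_zero] at h3
  nlinarith

/-- Gluing two differentiable functions at the origin. -/
lemma hasDerivAt_glue {f g f' g' : ℝ → ℝ} (hf : ∀ x, HasDerivAt f (f' x) x)
    (hg : ∀ x, HasDerivAt g (g' x) x) (h0 : f 0 = g 0) (h1 : f' 0 = g' 0) (x : ℝ) :
    HasDerivAt (fun x => if 0 ≤ x then f x else g x) (if 0 ≤ x then f' x else g' x) x := by
  rcases lt_trichotomy x 0 with hx | rfl | hx
  · rw [if_neg (not_le.2 hx)]
    refine (hg x).congr_of_eventuallyEq ?_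
    filter_upwards [Iio_mem_nhds hx] with y hy
    rw [if_neg (not_le.2 hy)]
  · rw [if_pos le_rfl, ← hasDerivWithinAt_univ, ← Set.Iic_union_Ici (a := (0 : ℝ))]
    refine HasDerivWithinAt.union ?_ ?_
    · rw [h1]
      refine (hg 0).hasDerivWithinAt.congr (fun y hy => ?_) (by simp [h0])
      rcases (Set.mem_Iic.1 hy).eq_or_lt with rfl | h
      · simp [h0]
      · rw [if_neg (not_le.2 h)]
    · exact (hf 0).hasDerivWithinAt.congr (fun y hy => if_pos hy) (by simp)
  · rw [if_pos hx.le]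
    refine (hf x).congr_of_eventuallyEq ?_
    filter_upwards [Ioi_mem_nhds hx] with y hy
    rw [if_pos (Set.mem_Ioi.1 hy).le]

lemma lipschitz_glue {f g : ℝ → ℝ} {K : ℝ} (hf : ∀ u v, |f u - f v| ≤ K * |u - v|)
    (hg : ∀ u v, |g u - g v| ≤ K * |u - v|) (h0 : f 0 = g 0) (u v : ℝ) :
    |(if 0 ≤ u then f u else g u) - (if 0 ≤ v then f v else g v)| ≤ K * |u - v| := by
  have key : ∀ u v : ℝ, 0 ≤ u → v ≤ 0 → |f u - g v| ≤ K * |u - v| := by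
    intro u v hu hv
    have h1 := hf u 0
    have h2 := hg 0 v
    have h3 : |u - 0| + |0 - v| = |u - v| := by
      rw [abs_of_nonneg (by linarith), abs_of_nonneg (by linarith), abs_of_nonneg (by linarith)]
      ring
    calc |f u - g v| = |(f u - f 0) + (g 0 - g v)| := by rw [h0]; ring_nf
      _ ≤ |f u - f 0| + |g 0 - g v| := abs_add_le _ _
      _ ≤ K * |u - 0| + K * |0 - v| := add_le_add h1 h2
      _ = _ := by rw [← mul_add, h3]
  by_cases hu : 0 ≤ u <;> by_cases hv : 0 ≤ v
  · simpa [hu, hv] using hf u v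
  · simpa [hu, hv] using key u v hu (not_le.1 hv).le
  · simp only [hu, hv, if_true, if_false]
    rw [abs_sub_comm, abs_sub_comm u]
    exact key v u hv (not_le.1 hu).le
  · simpa [hu, hv] using hg u v

/-- Time increment of the heat flow of a Gaussian distribution function. -/
lemma gcdf_time_step (a : ℝ) {T : ℝ} (hT : 1 ≤ T) :
    gcdf (Real.sqrt (T / (T + 1)) * a) ≤ gcdf a - a * gpdf a / (2 * T) + 11 / T ^ 2 := by
  set l := Real.sqrt (T / (T + 1)) with hl
  have hT0 : 0 < T := by linarith
  have hl0 : 0 ≤ l := Real.sqrt_nonneg _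
  have hl2 : l ^ 2 = T / (T + 1) := Real.sq_sqrt (by positivity)
  have hl2' : l ^ 2 = 1 - 1 / (T + 1) := by
    rw [hl2]
    field_simp
    ring
  have hhalf : 1 / 2 ≤ l ^ 2 := by
    rw [hl2, div_le_div_iff₀ (by norm_num) (by positivity)]
    linarith
  have hl1 : l ≤ 1 := by
    have : 0 < 1 / (T + 1) := by positivity
    nlinarith
  have hinv : 1 / (T + 1) ≤ 1 / T := one_div_le_one_div_of_le hT0 (by linarith)
  have hm : 1 - l ≤ 1 / T := by nlinarith
  have hd : ∀ u, HasDerivAt (fun u => gcdf (u * a)) (a * gpdf (u * a)) u := by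
    intro u
    have := (hasDerivAt_gcdf (u * a)).comp u ((hasDerivAt_id u).mul_const a)
    refine this.congr_deriv ?_
    ring
  have hd2 : ∀ u, HasDerivAt (fun u => a * gpdf (u * a)) (-(u * a ^ 3 * gpdf (u * a))) u := by
    intro u
    have := ((hasDerivAt_gpdf (u * a)).comp u ((hasDerivAt_id u).mul_const a)).const_mul a
    refine this.congr_deriv ?_
    ring
  have hbd : ∀ u, l ≤ u → u ≤ 1 → |-(u * a ^ 3 * gpdf (u * a))| ≤ 10 := by
    intro u hu hu1
    have h1 := abs_pow_three_mul_gpdf_le (u * a)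
    have h2 : u ^ 2 * |-(u * a ^ 3 * gpdf (u * a))| = |(u * a) ^ 3 * gpdf (u * a)| := by
      rw [abs_neg, show (u * a) ^ 3 * gpdf (u * a) = u ^ 2 * (u * a ^ 3 * gpdf (u * a)) by ring,
        abs_mul (u ^ 2), abs_of_nonneg (sq_nonneg u)]
    have h3 : 1 / 2 ≤ u ^ 2 := by nlinarith
    have h4 := abs_nonneg (-(u * a ^ 3 * gpdf (u * a)))
    nlinarith
  have hmem : ∀ u ∈ Set.uIcc (1 : ℝ) l, l ≤ u ∧ u ≤ 1 := by
    intro u hu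
    rwa [Set.uIcc_of_ge hl1] at hu
  have hG : ∀ u ∈ Set.uIcc (1 : ℝ) l, |a * gpdf (u * a) - a * gpdf (1 * a)| ≤ 10 * |l - 1| := by
    intro u hu
    have h := Convex.norm_image_sub_le_of_norm_hasDerivWithin_le (s := Set.uIcc (1 : ℝ) l)
      (f := fun u => a * gpdf (u * a)) (C := 10) (x := 1) (y := u)
      (fun v _ => (hd2 v).hasDerivWithinAt)
      (fun v hv => hbd v (hmem v hv).1 (hmem v hv).2) (convex_uIcc _ _) Set.left_mem_uIcc hu
    rw [Real.norm_eq_abs, Real.norm_eq_abs] at h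
    exact h.trans (mul_le_mul_of_nonneg_left (abs_sub_le_of_mem_uIcc hu) (by norm_num))
  have h := (abs_le.1 (taylor_one_of_deriv_le (fun u _ => hd u) hG)).2
  simp only [one_mul] at h
  have h5 : |l - 1| * |l - 1| ≤ 1 / T ^ 2 := by
    rw [abs_mul_abs_self]
    have : 1 / T ^ 2 = (1 / T) * (1 / T) := by field_simp
    nlinarith
  have hT2 : 1 / T - 1 / (T + 1) ≤ 1 / T ^ 2 := by
    rw [div_sub_div _ _ hT0.ne' (by positivity), div_le_div_iff₀ (by positivity) (by positivity)]
    nlinarith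
  have h6 : |l - 1 + 1 / (2 * T)| ≤ 1 / T ^ 2 := by
    have e1 : 1 / (2 * T) = 1 / T / 2 := by field_simp
    have e2 : (1 - l) ^ 2 ≤ 1 / T ^ 2 := by
      rw [← sq_abs, abs_sub_comm, sq]
      exact h5
    have e3 : 0 < 1 / T ^ 2 := by positivity
    rw [e1, abs_le]
    constructor <;> nlinarith
  have h7 : a * gpdf a * (l - 1 + 1 / (2 * T)) ≤ 1 / T ^ 2 := by
    refine (le_abs_self _).trans ?_
    rw [abs_mul]
    calc _ ≤ 1 * (1 / T ^ 2) := mul_le_mul (abs_mul_gpdf_le a) h6 (abs_nonneg _) zero_le_one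
      _ = _ := one_mul _
  have e4 : a * gpdf a / (2 * T) = a * gpdf a * (1 / (2 * T)) := by ring
  have e5 : (11 : ℝ) / T ^ 2 = 10 * (1 / T ^ 2) + 1 / T ^ 2 := by ring
  rw [e4, e5]
  nlinarith

/-- Value function of the bang-bang control problem at unit remaining time. The scales are `σ₁`
above the threshold and `σ₂` below it. -/
def bangVal (σ₁ σ₂ A B z : ℝ) : ℝ :=
  if 0 ≤ z then A * (1 - gcdf (z / σ₁)) else 1 - B * gcdf (z / σ₂)

/-- First derivative of `bangVal`. -/
def bangVal' (σ₁ σ₂ κ z : ℝ) : ℝ :=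
  if 0 ≤ z then -κ * gpdf (z / σ₁) else -κ * gpdf (z / σ₂)

/-- Second derivative of `bangVal`. -/
def bangVal'' (σ₁ σ₂ κ z : ℝ) : ℝ :=
  if 0 ≤ z then κ / σ₁ * (z / σ₁ * gpdf (z / σ₁)) else κ / σ₂ * (z / σ₂ * gpdf (z / σ₂))

lemma hasDerivAt_gcdf_div (σ z : ℝ) :
    HasDerivAt (fun z => gcdf (z / σ)) (gpdf (z / σ) / σ) z := by
  have := (hasDerivAt_gcdf (z / σ)).comp z ((hasDerivAt_id z).div_const σ)
  refine this.congr_deriv ?_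
  ring

lemma hasDerivAt_gpdf_div (σ z : ℝ) :
    HasDerivAt (fun z => gpdf (z / σ)) (-(z / σ * gpdf (z / σ)) / σ) z := by
  have := (hasDerivAt_gpdf (z / σ)).comp z ((hasDerivAt_id z).div_const σ)
  refine this.congr_deriv ?_
  ring

lemma hasDerivAt_bangVal {σ₁ σ₂ A B κ : ℝ} (hAB : A + B = 2) (hA : A / σ₁ = κ)
    (hB : B / σ₂ = κ) (z : ℝ) :
    HasDerivAt (bangVal σ₁ σ₂ A B) (bangVal' σ₁ σ₂ κ z) z := by
  refine hasDerivAt_glue (f := fun z => A * (1 - gcdf (z / σ₁)))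
    (g := fun z => 1 - B * gcdf (z / σ₂)) (f' := fun z => -κ * gpdf (z / σ₁))
    (g' := fun z => -κ * gpdf (z / σ₂)) (fun x => ?_) (fun x => ?_) ?_ (by simp) z
  · refine (((hasDerivAt_gcdf_div σ₁ x).const_sub 1).const_mul A).congr_deriv ?_
    rw [← hA]
    ring
  · refine (((hasDerivAt_gcdf_div σ₂ x).const_mul B).const_sub 1).congr_deriv ?_
    rw [← hB]
    ring
  · simp only [zero_div, gcdf_zero]
    linarith

lemma hasDerivAt_bangVal' (σ₁ σ₂ κ z : ℝ) :
    HasDerivAt (bangVal' σ₁ σ₂ κ) (bangVal'' σ₁ σ₂ κ z) z := by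
  refine hasDerivAt_glue (f := fun z => -κ * gpdf (z / σ₁)) (g := fun z => -κ * gpdf (z / σ₂))
    (f' := fun z => κ / σ₁ * (z / σ₁ * gpdf (z / σ₁)))
    (g' := fun z => κ / σ₂ * (z / σ₂ * gpdf (z / σ₂))) (fun x => ?_) (fun x => ?_)
    (by simp) (by simp) z
  · refine ((hasDerivAt_gpdf_div σ₁ x).const_mul (-κ)).congr_deriv ?_
    ring
  · refine ((hasDerivAt_gpdf_div σ₂ x).const_mul (-κ)).congr_deriv ?_
    ring

lemma lipschitz_mul_gpdf (u v : ℝ) : |u * gpdf u - v * gpdf v| ≤ 3 * |u - v| := by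
  have h := Convex.norm_image_sub_le_of_norm_hasDerivWithin_le (s := Set.univ)
    (f := fun u => u * gpdf u) (f' := fun u => (1 - u ^ 2) * gpdf u) (C := 3) (x := v) (y := u)
    (fun u _ => by
      refine HasDerivAt.hasDerivWithinAt ?_
      refine ((hasDerivAt_id u).mul (hasDerivAt_gpdf u)).congr_deriv ?_
      simp only [id]
      ring)
    (fun u _ => abs_sq_sub_one_mul_gpdf_le u) convex_univ (Set.mem_univ _) (Set.mem_univ _)
  simpa only [Real.norm_eq_abs] using h

lemma exists_lipschitz_bangVal'' {σ₁ σ₂ κ : ℝ} (h₁ : 0 < σ₁) (h₂ : 0 < σ₂) (hκ : 0 ≤ κ) :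
    ∃ K, 0 ≤ K ∧ ∀ u v, |bangVal'' σ₁ σ₂ κ u - bangVal'' σ₁ σ₂ κ v| ≤ K * |u - v| := by
  have key : ∀ σ : ℝ, 0 < σ → ∀ u v, |κ / σ * (u / σ * gpdf (u / σ)) -
      κ / σ * (v / σ * gpdf (v / σ))| ≤ 3 * κ / σ ^ 2 * |u - v| := by
    intro σ hσ u v
    rw [← mul_sub, abs_mul, abs_of_nonneg (by positivity : 0 ≤ κ / σ)]
    have h := lipschitz_mul_gpdf (u / σ) (v / σ)
    rw [← sub_div, abs_div, abs_of_pos hσ] at h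
    calc _ ≤ κ / σ * (3 * (|u - v| / σ)) := mul_le_mul_of_nonneg_left h (by positivity)
      _ = _ := by field_simp
  refine ⟨3 * κ / σ₁ ^ 2 + 3 * κ / σ₂ ^ 2, by positivity, ?_⟩
  refine lipschitz_glue (f := fun z => κ / σ₁ * (z / σ₁ * gpdf (z / σ₁)))
    (g := fun z => κ / σ₂ * (z / σ₂ * gpdf (z / σ₂))) (fun u v => ?_) (fun u v => ?_) (by simp)
  · refine (key σ₁ h₁ u v).trans (mul_le_mul_of_nonneg_right ?_ (abs_nonneg _))
    linarith [show 0 ≤ 3 * κ / σ₂ ^ 2 by positivity]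
  · refine (key σ₂ h₂ u v).trans (mul_le_mul_of_nonneg_right ?_ (abs_nonneg _))
    linarith [show 0 ≤ 3 * κ / σ₁ ^ 2 by positivity]

lemma bangVal'_neg {σ₁ σ₂ κ : ℝ} (hκ : 0 < κ) (z : ℝ) : bangVal' σ₁ σ₂ κ z < 0 := by
  unfold bangVal'
  have h1 := mul_pos hκ (gpdf_pos (z / σ₁))
  have h2 := mul_pos hκ (gpdf_pos (z / σ₂))
  split_ifs <;> linarith

lemma strictAnti_bangVal {σ₁ σ₂ A B κ : ℝ} (hκ : 0 < κ) (hAB : A + B = 2) (hA : A / σ₁ = κ)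
    (hB : B / σ₂ = κ) : StrictAnti (bangVal σ₁ σ₂ A B) :=
  strictAnti_of_deriv_neg fun z => by
    rw [(hasDerivAt_bangVal hAB hA hB z).deriv]
    exact bangVal'_neg hκ z

lemma bangVal_nonneg {σ₁ σ₂ A B κ : ℝ} (hA0 : 0 ≤ A) (hκ : 0 < κ) (hAB : A + B = 2)
    (hA : A / σ₁ = κ) (hB : B / σ₂ = κ) (z : ℝ) : 0 ≤ bangVal σ₁ σ₂ A B z := by
  have h : ∀ z, 0 ≤ z → 0 ≤ bangVal σ₁ σ₂ A B z := by
    intro z hz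
    rw [bangVal, if_pos hz]
    exact mul_nonneg hA0 (sub_nonneg.2 (gcdf_le_one _))
  rcases le_total 0 z with hz | hz
  · exact h z hz
  · exact (h 0 le_rfl).trans ((strictAnti_bangVal hκ hAB hA hB).antitone hz)

lemma tendsto_bangVal_atBot {σ₁ σ₂ A B : ℝ} (h₂ : 0 < σ₂) :
    Tendsto (bangVal σ₁ σ₂ A B) atBot (nhds 1) := by
  have h : Tendsto (fun z => 1 - B * gcdf (z / σ₂)) atBot (nhds (1 - B * 0)) :=
    ((tendsto_gcdf_atBot.comp (tendsto_id.atBot_div_const h₂)).const_mul B).const_sub 1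
  rw [mul_zero, sub_zero] at h
  refine h.congr' ?_
  filter_upwards [eventually_lt_atBot 0] with z hz
  rw [bangVal, if_neg (not_le.2 hz)]

/-- `bangVal` is, up to a small error, increasing along the backward heat flow. -/
lemma bangVal_time_step {σ₁ σ₂ A B κ : ℝ} (h₁ : 0 < σ₁) (h₂ : 0 < σ₂) (hA0 : 0 ≤ A)
    (hB0 : 0 ≤ B) (hAB : A + B = 2) (hA : A / σ₁ = κ) (hB : B / σ₂ = κ) (z : ℝ) {T : ℝ}
    (hT : 1 ≤ T) :
    bangVal σ₁ σ₂ A B z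
        + bangVal'' σ₁ σ₂ κ z * (if 0 ≤ z then σ₁ ^ 2 else σ₂ ^ 2) / (2 * T) - 22 / T ^ 2
      ≤ bangVal σ₁ σ₂ A B (Real.sqrt (T / (T + 1)) * z) := by
  have hT0 : 0 < T := by linarith
  have hl : 0 < Real.sqrt (T / (T + 1)) := Real.sqrt_pos.2 (by positivity)
  have hp : 0 ≤ 11 / T ^ 2 := by positivity
  have e22 : 22 / T ^ 2 = 2 * (11 / T ^ 2) := by ring
  rw [e22]
  unfold bangVal bangVal''
  by_cases hz : 0 ≤ z
  · have hz' : 0 ≤ Real.sqrt (T / (T + 1)) * z := by positivity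
    rw [if_pos hz, if_pos hz, if_pos hz, if_pos hz', mul_div_assoc (Real.sqrt (T / (T + 1))) z σ₁]
    have h := mul_le_mul_of_nonneg_left (gcdf_time_step (z / σ₁) hT) hA0
    have e : κ / σ₁ * (z / σ₁ * gpdf (z / σ₁)) * σ₁ ^ 2 / (2 * T)
        = A * (z / σ₁ * gpdf (z / σ₁) / (2 * T)) := by
      rw [← hA]
      field_simp
    rw [e]
    nlinarith
  · have hz' : ¬ 0 ≤ Real.sqrt (T / (T + 1)) * z :=
      not_le.2 (mul_neg_of_pos_of_neg hl (not_le.1 hz))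
    rw [if_neg hz, if_neg hz, if_neg hz, if_neg hz', mul_div_assoc (Real.sqrt (T / (T + 1))) z σ₂]
    have h := mul_le_mul_of_nonneg_left (gcdf_time_step (z / σ₂) hT) hB0
    have e : κ / σ₂ * (z / σ₂ * gpdf (z / σ₂)) * σ₂ ^ 2 / (2 * T)
        = B * (z / σ₂ * gpdf (z / σ₂) / (2 * T)) := by
      rw [← hB]
      field_simp
    rw [e]
    nlinarith

/-- One-step supersolution property of `bangVal` for a controlled walk. -/
lemma exists_bangVal_step {σ₁ σ₂ A B κ b : ℝ} (h₁ : 0 < σ₁) (h₂ : 0 < σ₂) (hA0 : 0 ≤ A)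
    (hB0 : 0 ≤ B) (hAB : A + B = 2) (hA : A / σ₁ = κ) (hB : B / σ₂ = κ) (hb : 0 ≤ b)
    (ι : Type*) [Fintype ι] :
    ∃ K, 0 ≤ K ∧ ∀ (p Z : ι → ℝ) (x T : ℝ), 1 ≤ T → (∀ i, 0 ≤ p i) →
      ∑ i, p i = 1 → (∀ i, |Z i| ≤ b) → ∑ i, p i * Z i = 0 →
      ∑ i, p i * Z i ^ 2 = (if 0 ≤ x then σ₁ ^ 2 else σ₂ ^ 2) →
      ∑ i, p i * bangVal σ₁ σ₂ A B ((x + Z i) / Real.sqrt T)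
        ≤ bangVal σ₁ σ₂ A B (x / Real.sqrt (T + 1)) + K / (T * Real.sqrt T) := by
  have hκ : 0 ≤ κ := hA ▸ div_nonneg hA0 h₁.le
  obtain ⟨K, hK, hlip⟩ := exists_lipschitz_bangVal'' h₁ h₂ hκ
  refine ⟨K * b ^ 3 + 22, by positivity, ?_⟩
  intro p Z x T hT hp hp1 hZb hZ hZ2
  have hT0 : 0 < T := by linarith
  have hs : 0 < Real.sqrt T := Real.sqrt_pos.2 hT0
  have hss : Real.sqrt T * Real.sqrt T = T := Real.mul_self_sqrt hT0.le
  set z := x / Real.sqrt T with hz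
  have hsgn : (if 0 ≤ x then σ₁ ^ 2 else σ₂ ^ 2) = if 0 ≤ z then σ₁ ^ 2 else σ₂ ^ 2 := by
    have : 0 ≤ z ↔ 0 ≤ x := by
      refine ⟨fun h => ?_, fun h => div_nonneg h hs.le⟩
      have := mul_nonneg h hs.le
      rwa [hz, div_mul_cancel₀ _ hs.ne'] at this
    simp only [this]
  have hterm : ∀ i, p i * bangVal σ₁ σ₂ A B ((x + Z i) / Real.sqrt T)
      ≤ p i * bangVal σ₁ σ₂ A B z + bangVal' σ₁ σ₂ κ z / Real.sqrt T * (p i * Z i)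
        + bangVal'' σ₁ σ₂ κ z / (2 * T) * (p i * Z i ^ 2)
        + p i * (K * b ^ 3 / (T * Real.sqrt T)) := by
    intro i
    have h := taylor_two_of_lipschitz hK (hasDerivAt_bangVal hAB hA hB)
      (hasDerivAt_bangVal' σ₁ σ₂ κ) hlip z (Z i / Real.sqrt T)
    have h3 : K * |Z i / Real.sqrt T| ^ 3 ≤ K * b ^ 3 / (T * Real.sqrt T) := by
      rw [abs_div, abs_of_pos hs, div_pow, mul_div_assoc,
        show Real.sqrt T ^ 3 = T * Real.sqrt T by rw [pow_succ, Real.sq_sqrt hT0.le]]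
      have := hZb i
      gcongr
    have h4 : (Z i / Real.sqrt T) ^ 2 / 2 = Z i ^ 2 / (2 * T) := by
      rw [div_pow, Real.sq_sqrt hT0.le]
      field_simp
    rw [add_div]
    have h5 := mul_le_mul_of_nonneg_left (h.trans (add_le_add_right h3 _)) (hp i)
    refine h5.trans (le_of_eq ?_)
    rw [mul_div_assoc, h4]
    ring
  have hsum := Finset.sum_le_sum (s := Finset.univ) fun i _ => hterm i
  rw [Finset.sum_add_distrib, Finset.sum_add_distrib, Finset.sum_add_distrib, ← Finset.sum_mul,
    ← Finset.mul_sum, ← Finset.mul_sum, ← Finset.sum_mul, hp1, hZ, hZ2, hsgn] at hsum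
  have htime := bangVal_time_step h₁ h₂ hA0 hB0 hAB hA hB z hT
  have harg : Real.sqrt (T / (T + 1)) * z = x / Real.sqrt (T + 1) := by
    rw [hz, Real.sqrt_div hT0.le]
    field_simp
  rw [harg] at htime
  have hT2 : 22 / T ^ 2 ≤ 22 / (T * Real.sqrt T) := by
    have : Real.sqrt T ≤ T := Real.sqrt_le_self_iff.2 (Or.inr hT)
    rw [sq]
    gcongr
  rw [add_div]
  have e : bangVal'' σ₁ σ₂ κ z / (2 * T) * (if 0 ≤ z then σ₁ ^ 2 else σ₂ ^ 2)
    = bangVal'' σ₁ σ₂ κ z * (if 0 ≤ z then σ₁ ^ 2 else σ₂ ^ 2) / (2 * T) := by ring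
  rw [e] at hsum
  linarith

lemma exists_abs_centDens_le (W : X → Y → ℝ) : ∃ b, 0 ≤ b ∧ ∀ x y, |centDens W x y| ≤ b := by
  refine ⟨∑ x, ∑ y, |centDens W x y|, by positivity, fun x y => ?_⟩
  refine (Finset.single_le_sum (f := fun y => |centDens W x y|) (fun _ _ => abs_nonneg _)
    (Finset.mem_univ y)).trans ?_
  exact Finset.single_le_sum (f := fun x => ∑ y, |centDens W x y|)
    (fun _ _ => Finset.sum_nonneg fun _ _ => abs_nonneg _) (Finset.mem_univ x)

/-- Weak converse on the `√n` scale: code sizes exceed `exp (nC)` by at most `exp (O(√n))`. -/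
lemma exists_Mfb_set_le {W : X → Y → ℝ} (hW : IsChannel W) (hcol : NoZeroColumn W) {P : X → ℝ}
    (hP : P ∈ capacityAchievers W) {ε : ℝ} (hε : ε < 1) :
    ∃ a K, 0 < K ∧ ∀ᶠ n : ℕ in atTop,
      ∀ m ∈ {m | ∃ R : ℝ, m = (⌈Real.exp (n * R)⌉₊ : ℝ) ∧ minErr W n R ≤ ε},
        m ≤ K * Real.exp (n * capacity W + a * Real.sqrt n) := by
  obtain ⟨b, hb0, hb⟩ := exists_abs_centDens_le W
  have hq := qStar_pos hW hcol hP
  have hq1 : ∑ y, qStar W y = 1 := by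
    rw [← outDist_eq_qStar hW hP]
    exact (isDist_outDist hW hP.1).2
  have hj : ∀ x, ∑ y, W x y * centDens W x y ≤ 0 := by
    intro x
    have h := sum_mul_iStar_le hW hcol hP x
    simp only [centDens, mul_sub, Finset.sum_sub_distrib, ← Finset.sum_mul, (hW x).2]
    linarith
  have hX : Nonempty X := by
    by_contra hX
    rw [not_nonempty_iff] at hX
    simpa using hP.1.2
  have hε' : 0 < (1 - ε) / 4 := by linarith
  refine ⟨b ^ 2 - Real.log ((1 - ε) / 4), ((1 - ε) / 4)⁻¹, inv_pos.2 hε', ?_⟩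
  filter_upwards [eventually_gt_atTop 0,
    tendsto_natCast_atTop_atTop.eventually (eventually_ge_atTop (b ^ 2))] with n hn hnb
  rintro m ⟨R, rfl, hR⟩
  have hn' : (0 : ℝ) < n := by exact_mod_cast hn
  have hs : 0 < Real.sqrt n := Real.sqrt_pos.2 hn'
  have hM : 0 < ⌈Real.exp (n * R)⌉₊ := Nat.ceil_pos.2 (Real.exp_pos _)
  have hM' : (0 : ℝ) < ⌈Real.exp (n * R)⌉₊ := by exact_mod_cast hM
  obtain ⟨e, ⟨enc, dec, rfl⟩, he⟩ := exists_lt_of_csInf_lt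
    (s := {e | ∃ enc dec, e = errProb W n ⌈Real.exp (n * R)⌉₊ enc dec})
    ⟨_, fun _ _ => hX.some, fun _ => ⟨0, hM⟩, rfl⟩
    (lt_of_le_of_lt hR (by linarith : ε < (1 + ε) / 2))
  have h := le_errProb hW hq hq1 hb hj (θ := 1 / Real.sqrt n) (by positivity)
    (by
      rw [one_div_mul_eq_div, div_le_one hs]
      exact Real.le_sqrt_of_sq_le hnb)
    ((b ^ 2 - Real.log ((1 - ε) / 4)) * Real.sqrt n) hM enc dec
  have e1 : (n : ℝ) * (1 / Real.sqrt n * b) ^ 2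
      - 1 / Real.sqrt n * ((b ^ 2 - Real.log ((1 - ε) / 4)) * Real.sqrt n)
        = Real.log ((1 - ε) / 4) := by
    rw [mul_pow, div_pow, one_pow, Real.sq_sqrt hn'.le]
    field_simp
    ring
  rw [e1, Real.exp_log hε'] at h
  have h2 : (1 - ε) / 4 ≤ Real.exp (n * capacity W + (b ^ 2 - Real.log ((1 - ε) / 4))
      * Real.sqrt n) / ⌈Real.exp (n * R)⌉₊ := by linarith
  rw [le_div_iff₀ hM'] at h2
  rwa [inv_mul_eq_div, le_div_iff₀ hε', mul_comm]

/-- Codes built from the bang-bang control that uses `P₁` above the threshold and `P₂` below it. -/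
lemma exists_mem_Mfb_set {W : X → Y → ℝ} (hW : IsChannel W) (hcol : NoZeroColumn W)
    {P₁ P₂ : X → ℝ} (hP₁ : P₁ ∈ capacityAchievers W) (hP₂ : P₂ ∈ capacityAchievers W)
    {σ₁ σ₂ A B κ : ℝ} (h₁ : 0 < σ₁) (h₂ : 0 < σ₂) (hA0 : 0 < A) (hB0 : 0 ≤ B) (hAB : A + B = 2)
    (hA : A / σ₁ = κ) (hB : B / σ₂ = κ) (hv₁ : ∑ x, P₁ x * nu W x = σ₁ ^ 2)
    (hv₂ : ∑ x, P₂ x * nu W x = σ₂ ^ 2) :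
    ∃ K, 0 ≤ K ∧ ∀ (ε L a T c : ℝ) (n M : ℕ), 1 ≤ T → 0 < c →
      c ≤ bangVal σ₁ σ₂ A B (-a / Real.sqrt T) → 0 < n → 0 < M →
      (M : ℝ) ≤ Real.exp (n * capacity W + L) *
        (ε - (bangVal σ₁ σ₂ A B ((-L - a) / Real.sqrt (T + n)) + n * (K / (T * Real.sqrt T))) / c) →
      (M : ℝ) ∈ {m | ∃ R : ℝ, m = (⌈Real.exp (n * R)⌉₊ : ℝ) ∧ minErr W n R ≤ ε} := by
  obtain ⟨b, hb0, hb⟩ := exists_abs_centDens_le W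
  obtain ⟨K, hK, hstep⟩ := exists_bangVal_step h₁ h₂ hA0.le hB0 hAB hA hB hb0 (X × Y)
  have hκ : 0 < κ := hA ▸ div_pos hA0 h₁
  have hq := qStar_pos hW hcol hP₁
  refine ⟨K, hK, fun ε L a T c n M hT hc hca hn hM hMle => ?_⟩
  have hT0 : 0 < T := by linarith
  set ψ := bangVal σ₁ σ₂ A B with hψ
  set U : ℕ → ℝ → ℝ := fun k s =>
    (ψ ((s - L - a) / Real.sqrt (T + k)) + k * (K / (T * Real.sqrt T))) / c with hU
  have hU0 : ∀ s, (if s ≤ L then (1 : ℝ) else 0) ≤ U 0 s := by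
    intro s
    simp only [hU, Nat.cast_zero, add_zero, zero_mul]
    split_ifs with h
    · rw [one_le_div hc]
      refine hca.trans ((strictAnti_bangVal hκ hAB hA hB).antitone ?_)
      exact div_le_div_of_nonneg_right (by linarith) (Real.sqrt_nonneg _)
    · exact div_nonneg (bangVal_nonneg hA0.le hκ hAB hA hB _) hc.le
  have hUs : ∀ k s, ∃ P : X → ℝ, IsDist P ∧ outDist P W = qStar W ∧
      ∑ x, P x * ∑ y, W x y * U k (s + centDens W x y) ≤ U (k + 1) s := by
    intro k s
    obtain ⟨P, hP, hPv⟩ : ∃ P ∈ capacityAchievers W,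
        ∑ x, P x * nu W x = if 0 ≤ s - L - a then σ₁ ^ 2 else σ₂ ^ 2 := by
      split_ifs
      · exact ⟨P₁, hP₁, hv₁⟩
      · exact ⟨P₂, hP₂, hv₂⟩
    refine ⟨P, hP.1, outDist_eq_qStar hW hP, ?_⟩
    have hprod : ∀ g : X → Y → ℝ, ∑ i : X × Y, P i.1 * W i.1 i.2 * g i.1 i.2
        = ∑ x, P x * ∑ y, W x y * g x y := by
      intro g
      simp only [Fintype.sum_prod_type, Finset.mul_sum, mul_assoc]
    have hp1 : ∑ i : X × Y, P i.1 * W i.1 i.2 = 1 := by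
      have h := hprod fun _ _ => 1
      simp only [mul_one, (hW _).2, hP.1.2] at h
      exact h
    have hk : (0 : ℝ) ≤ k := k.cast_nonneg
    have hTk : 0 < T + k := by linarith
    have h := hstep (fun i => P i.1 * W i.1 i.2) (fun i => centDens W i.1 i.2) (s - L - a) (T + k)
      (by linarith) (fun i => mul_nonneg (hP.1.1 _) ((hW _).1 _)) hp1 (fun i => hb _ _)
      ((hprod (centDens W)).trans (sum_mul_centDens hW hcol hP))
      ((hprod fun x y => centDens W x y ^ 2).trans
        ((sum_mul_centDens_sq hW hcol hP).trans hPv))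
    have hKT : K / ((T + k) * Real.sqrt (T + k)) ≤ K / (T * Real.sqrt T) := by
      gcongr <;> linarith
    calc ∑ x, P x * ∑ y, W x y * U k (s + centDens W x y)
        = ∑ i : X × Y, P i.1 * W i.1 i.2 * U k (s + centDens W i.1 i.2) :=
          (hprod fun x y => U k (s + centDens W x y)).symm
      _ = (∑ i : X × Y, P i.1 * W i.1 i.2 *
            ψ ((s - L - a + centDens W i.1 i.2) / Real.sqrt (T + k))
            + k * (K / (T * Real.sqrt T))) / c := by
          rw [add_div, ← one_mul ((k : ℝ) * _), ← hp1, Finset.sum_mul, Finset.sum_div,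
            Finset.sum_div, ← Finset.sum_add_distrib]
          refine Finset.sum_congr rfl fun i _ => ?_
          simp only [hU]
          rw [show s + centDens W i.1 i.2 - L - a = s - L - a + centDens W i.1 i.2 by ring]
          ring
      _ ≤ U (k + 1) s := by
          simp only [hU]
          refine div_le_div_of_nonneg_right ?_ hc.le
          push_cast
          rw [← add_assoc T]
          linarith
  obtain ⟨f, D, hdis, hlaw, -⟩ := exists_codebook hW hq hU0 hUs n M (by
    simpa only [hU, zero_sub] using hMle)
  obtain ⟨dec, hdec⟩ := exists_errProb_le hW hM f D hdis hlaw
  exact mem_Mfb_set hW hn hM f dec hdec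

lemma one_mem_Mfb_set {X : Type*} {W : X → Y → ℝ} (hW : IsChannel W) [Nonempty X] {ε : ℝ}
    (hε : 0 ≤ ε) {n : ℕ} (hn : 0 < n) :
    (1 : ℝ) ∈ {m | ∃ R : ℝ, m = (⌈Real.exp (n * R)⌉₊ : ℝ) ∧ minErr W n R ≤ ε} := by
  have h := mem_Mfb_set hW (ε := ε) hn one_pos (fun _ _ => Classical.arbitrary X)
    (fun _ => (0 : Fin 1)) (by simpa [errProb] using hε)
  simpa only [Nat.cast_one] using h

/-- Existence of intermediate parameters leaving room for all the approximation errors. -/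
lemma exists_bangVal_slack {σ₁ σ₂ A B κ : ℝ} (h₂ : 0 < σ₂) (hA0 : 0 ≤ A) (hκ : 0 < κ)
    (hAB : A + B = 2) (hA : A / σ₁ = κ) (hB : B / σ₂ = κ) {ε r r' : ℝ} (hε : 0 < ε)
    (hr : bangVal σ₁ σ₂ A B (-r) = ε) (hr' : r' < r) :
    ∃ c a δ, 0 < c ∧ 0 < δ ∧ c ≤ bangVal σ₁ σ₂ A B (-a) ∧
      bangVal σ₁ σ₂ A B ((-r' - a * Real.sqrt δ) / Real.sqrt (1 + δ)) < c * ε := by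
  have hlt : bangVal σ₁ σ₂ A B (-r') < ε := by
    rw [← hr]
    exact strictAnti_bangVal hκ hAB hA hB (by linarith)
  have h0 := bangVal_nonneg hA0 hκ hAB hA hB (-r')
  obtain ⟨c, hc1, hc2⟩ := exists_between ((div_lt_one hε).2 hlt)
  have hc : 0 < c := lt_of_le_of_lt (by positivity) hc1
  rw [div_lt_iff₀ hε] at hc1
  obtain ⟨z, hz⟩ := ((tendsto_bangVal_atBot (σ₁ := σ₁) (A := A) (B := B) h₂).eventually
    (eventually_ge_nhds hc2)).exists
  have hcont : Continuous (bangVal σ₁ σ₂ A B) :=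
    continuous_iff_continuousAt.2 fun x => (hasDerivAt_bangVal hAB hA hB x).continuousAt
  have hlim : Tendsto (fun δ : ℝ => bangVal σ₁ σ₂ A B
      ((-r' - -z * Real.sqrt δ) / Real.sqrt (1 + δ))) (nhdsWithin 0 (Set.Ioi 0))
      (nhds (bangVal σ₁ σ₂ A B (-r'))) := by
    have : ContinuousAt (fun δ : ℝ => bangVal σ₁ σ₂ A B
        ((-r' - -z * Real.sqrt δ) / Real.sqrt (1 + δ))) 0 := by
      refine hcont.continuousAt.comp ?_
      refine ContinuousAt.div (by fun_prop) (by fun_prop) (by simp)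
    have h := this.tendsto
    simp only [Real.sqrt_zero, mul_zero, sub_zero, add_zero, Real.sqrt_one, div_one] at h
    exact h.mono_left nhdsWithin_le_nhds
  obtain ⟨δ, hδ, hδ0⟩ := ((hlim.eventually (eventually_lt_nhds hc1)).and
    self_mem_nhdsWithin).exists
  exact ⟨c, -z, δ, hc, hδ0, by rwa [neg_neg], hδ⟩

lemma eventually_exp_le_Mfb {W : X → Y → ℝ} (hW : IsChannel W) (hcol : NoZeroColumn W)
    {P₁ P₂ : X → ℝ} (hP₁ : P₁ ∈ capacityAchievers W) (hP₂ : P₂ ∈ capacityAchievers W)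
    {σ₁ σ₂ A B κ : ℝ} (h₁ : 0 < σ₁) (h₂ : 0 < σ₂) (hA0 : 0 < A) (hB0 : 0 ≤ B) (hAB : A + B = 2)
    (hA : A / σ₁ = κ) (hB : B / σ₂ = κ) (hv₁ : ∑ x, P₁ x * nu W x = σ₁ ^ 2)
    (hv₂ : ∑ x, P₂ x * nu W x = σ₂ ^ 2) {ε r r' : ℝ} (hε : 0 < ε) (hε1 : ε < 1)
    (hr : bangVal σ₁ σ₂ A B (-r) = ε) (hr' : r' < r) :
    ∀ᶠ n : ℕ in atTop, Real.exp (n * capacity W + r' * Real.sqrt n) ≤ Mfb W n ε := by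
  have hX : Nonempty X := by
    by_contra hX
    rw [not_nonempty_iff] at hX
    simpa using hP₁.1.2
  have hκ : 0 < κ := hA ▸ div_pos hA0 h₁
  obtain ⟨K, hK, hcode⟩ := exists_mem_Mfb_set hW hcol hP₁ hP₂ h₁ h₂ hA0 hB0 hAB hA hB hv₁ hv₂
  obtain ⟨r₂, hr₂, hr₂'⟩ := exists_between hr'
  obtain ⟨c, a, δ, hc, hδ, hca, hlt⟩ :=
    exists_bangVal_slack h₂ hA0.le hκ hAB hA hB hε hr hr₂'
  set e₁ := bangVal σ₁ σ₂ A B ((-r₂ - a * Real.sqrt δ) / Real.sqrt (1 + δ)) with he₁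
  obtain ⟨a', K', hK', hconv⟩ := exists_Mfb_set_le hW hcol hP₁ hε1
  have hsqrt : Tendsto (fun n : ℕ => Real.sqrt n) atTop atTop :=
    Real.tendsto_sqrt_atTop.comp tendsto_natCast_atTop_atTop
  have hη : 0 < (ε - e₁ / c) / 2 := by
    have : e₁ / c < ε := (div_lt_iff₀' hc).2 hlt
    linarith
  have hlim1 : Tendsto (fun n : ℕ => K / (δ * Real.sqrt δ) / c / Real.sqrt n) atTop (nhds 0) :=
    hsqrt.const_div_atTop _
  have hlim2 : Tendsto (fun n : ℕ => Real.exp ((r₂ - r') * Real.sqrt n)) atTop atTop :=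
    Real.tendsto_exp_atTop.comp (hsqrt.const_mul_atTop (sub_pos.2 hr₂))
  filter_upwards [hconv, eventually_gt_atTop 0, hlim1.eventually (eventually_le_nhds hη),
    hlim2.eventually (eventually_ge_atTop (2 / ((ε - e₁ / c) / 2))),
    (tendsto_natCast_atTop_atTop.const_mul_atTop hδ).eventually (eventually_ge_atTop 1)]
    with n hbdd hn hn1 hn2 hn3
  have hbdd' : BddAbove {m | ∃ R : ℝ, m = (⌈Real.exp (n * R)⌉₊ : ℝ) ∧ minErr W n R ≤ ε} :=
    ⟨_, fun m hm => hbdd m hm⟩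
  set t := Real.exp (n * capacity W + r' * Real.sqrt n) with ht
  have ht0 : 0 < t := Real.exp_pos _
  rcases le_or_gt 1 t with h1 | h1
  swap
  · exact h1.le.trans (le_csSup hbdd' (one_mem_Mfb_set hW hε.le hn))
  have hn' : (0 : ℝ) < n := by exact_mod_cast hn
  have hs : 0 < Real.sqrt n := Real.sqrt_pos.2 hn'
  have hsδ : 0 < Real.sqrt δ := Real.sqrt_pos.2 hδ
  have hT : Real.sqrt (δ * n) = Real.sqrt δ * Real.sqrt n := Real.sqrt_mul hδ.le _
  refine (Nat.le_ceil t).trans (le_csSup hbdd' ?_)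
  refine hcode ε (r₂ * Real.sqrt n) (a * Real.sqrt (δ * n)) (δ * n) c n ⌈t⌉₊ hn3 hc ?_ hn
    (Nat.ceil_pos.2 ht0) ?_
  · rwa [neg_div, mul_div_cancel_right₀ _ (by rw [hT]; positivity)]
  have earg : (-(r₂ * Real.sqrt n) - a * Real.sqrt (δ * n)) / Real.sqrt (δ * n + n)
      = (-r₂ - a * Real.sqrt δ) / Real.sqrt (1 + δ) := by
    rw [hT, show δ * n + n = (1 + δ) * (n : ℝ) by ring, Real.sqrt_mul (by positivity)]
    field_simp
  have eerr : n * (K / (δ * n * Real.sqrt (δ * n))) / c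
      = K / (δ * Real.sqrt δ) / c / Real.sqrt n := by
    rw [hT]
    field_simp
  rw [earg, ← he₁, add_div, eerr]
  have hexp : Real.exp (n * capacity W + r₂ * Real.sqrt n)
      = t * Real.exp ((r₂ - r') * Real.sqrt n) := by
    rw [ht, ← Real.exp_add]
    ring_nf
  rw [hexp]
  rw [div_le_iff₀ hη] at hn2
  calc (⌈t⌉₊ : ℝ) ≤ t * 2 := by linarith [Nat.ceil_lt_add_one ht0.le]
    _ ≤ t * (Real.exp ((r₂ - r') * Real.sqrt n) * ((ε - e₁ / c) / 2)) := by gcongr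
    _ = t * Real.exp ((r₂ - r') * Real.sqrt n) * ((ε - e₁ / c) / 2) := by ring
    _ ≤ _ := by
      refine mul_le_mul_of_nonneg_left ?_ (by positivity)
      linarith

lemma le_liminf_of_bangVal_eq {W : X → Y → ℝ} (hW : IsChannel W) (hcol : NoZeroColumn W)
    {P₁ P₂ : X → ℝ} (hP₁ : P₁ ∈ capacityAchievers W) (hP₂ : P₂ ∈ capacityAchievers W)
    {σ₁ σ₂ A B κ : ℝ} (h₁ : 0 < σ₁) (h₂ : 0 < σ₂) (hA0 : 0 < A) (hB0 : 0 ≤ B) (hAB : A + B = 2)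
    (hA : A / σ₁ = κ) (hB : B / σ₂ = κ) (hv₁ : ∑ x, P₁ x * nu W x = σ₁ ^ 2)
    (hv₂ : ∑ x, P₂ x * nu W x = σ₂ ^ 2) {ε r : ℝ} (hε : 0 < ε) (hε1 : ε < 1)
    (hr : bangVal σ₁ σ₂ A B (-r) = ε) :
    r ≤ Filter.liminf (fun n : ℕ =>
      (Real.log (Mfb W n ε) - n * capacity W) / Real.sqrt n) Filter.atTop := by
  have hge : ∀ r' < r, ∀ᶠ n : ℕ in atTop,
      Real.exp (n * capacity W + r' * Real.sqrt n) ≤ Mfb W n ε := fun r' hr' =>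
    eventually_exp_le_Mfb hW hcol hP₁ hP₂ h₁ h₂ hA0 hB0 hAB hA hB hv₁ hv₂ hε hε1 hr hr'
  have hX : Nonempty X := by
    by_contra hX
    rw [not_nonempty_iff] at hX
    simpa using hP₁.1.2
  have hcob : IsCoboundedUnder (· ≥ ·) atTop (fun n : ℕ =>
      (Real.log (Mfb W n ε) - n * capacity W) / Real.sqrt n) := by
    obtain ⟨a, K, hK, hconv⟩ := exists_Mfb_set_le hW hcol hP₁ hε1
    refine IsBoundedUnder.isCoboundedUnder_ge ⟨a + |Real.log K|, ?_⟩
    rw [eventually_map]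
    filter_upwards [hconv, eventually_gt_atTop 0, hge (r - 1) (by linarith)] with n hbdd hn hpos
    have hn' : (1 : ℝ) ≤ n := by exact_mod_cast hn
    have hs : 1 ≤ Real.sqrt n := Real.one_le_sqrt.2 hn'
    have hM : Mfb W n ε ≤ K * Real.exp (n * capacity W + a * Real.sqrt n) :=
      csSup_le ⟨1, one_mem_Mfb_set hW hε.le hn⟩ fun m hm => hbdd m hm
    have hlog := Real.log_le_log ((Real.exp_pos _).trans_le hpos) hM
    rw [Real.log_mul hK.ne' (Real.exp_pos _).ne', Real.log_exp] at hlog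
    rw [div_le_iff₀ (by linarith)]
    have h1 := le_abs_self (Real.log K)
    have h2 := mul_le_mul_of_nonneg_left hs (abs_nonneg (Real.log K))
    linarith
  refine le_of_forall_lt fun r' hr' => ?_
  obtain ⟨r₂, hr₂, hr₂'⟩ := exists_between hr'
  refine hr₂.trans_le (le_liminf_of_le hcob ?_)
  filter_upwards [hge r₂ hr₂', eventually_gt_atTop 0] with n hM hn
  have hn' : (0 : ℝ) < n := by exact_mod_cast hn
  rw [le_div_iff₀ (Real.sqrt_pos.2 hn')]
  have hlog := Real.log_le_log (Real.exp_pos _) hM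
  rw [Real.log_exp] at hlog
  linarith

lemma bangVal_neg_of_nonpos {σ₁ σ₂ A B : ℝ} (h₁ : 0 < σ₁) {p : ℝ} (hp0 : 0 < p) (hp : p ≤ 1 / 2) :
    bangVal σ₁ σ₂ A B (-(σ₁ * gcdfInv p)) = A * p := by
  have hinv : gcdf (gcdfInv p) = p := gcdf_gcdfInv hp0 (by linarith)
  have hle : gcdfInv p ≤ 0 := by
    rw [← strictMono_gcdf.le_iff_le, hinv, gcdf_zero]
    linarith
  have h0 : 0 ≤ -(σ₁ * gcdfInv p) := by nlinarith
  rw [bangVal, if_pos h0, neg_div, mul_div_cancel_left₀ _ h₁.ne', gcdf_neg, hinv, sub_sub_cancel]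

lemma bangVal_neg_of_pos {σ₁ σ₂ A B : ℝ} (h₂ : 0 < σ₂) {p : ℝ} (hp : 1 / 2 < p) (hp1 : p < 1) :
    bangVal σ₁ σ₂ A B (-(σ₂ * gcdfInv p)) = 1 - B * (1 - p) := by
  have hinv : gcdf (gcdfInv p) = p := gcdf_gcdfInv (by linarith) hp1
  have hlt : 0 < gcdfInv p := by
    rw [← strictMono_gcdf.lt_iff_lt, hinv, gcdf_zero]
    linarith
  have h0 : ¬ 0 ≤ -(σ₂ * gcdfInv p) := by
    have := mul_pos h₂ hlt
    linarith
  rw [bangVal, if_neg h0, neg_div, mul_div_cancel_left₀ _ h₂.ne', gcdf_neg, hinv]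

lemma capacityAchievers_nonempty_of_Vmin_ne_zero {W : X → Y → ℝ} (h : Vmin W ≠ 0) :
    (capacityAchievers W).Nonempty := by
  rw [Set.nonempty_iff_ne_empty]
  intro he
  exact h (by simp [Vmin, he])

/-- Theorem 2 (Refined achievability for compound-dispersion channels). -/
theorem refined_achievability
    {X Y : Type*} [Fintype X] [Fintype Y]
    (W : X → Y → ℝ) (hW : IsChannel W) (hcol : NoZeroColumn W)
    (hVmin : 0 < Vmin W)
    (β : ℝ) (hβ : β = Real.sqrt (Vmin W / Vmax W)) :
    ∀ ε : ℝ, 0 < ε → ε < 1 →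
      (ε ≤ β / (1 + β) →
        Filter.liminf (fun n : ℕ =>
            (Real.log (Mfb W n ε) - n * capacity W) / Real.sqrt n) Filter.atTop ≥
          Real.sqrt (Vmin W) * gcdfInv (1 / (2 * β) * (ε * (1 + β)))) ∧
      (β / (1 + β) < ε →
        Filter.liminf (fun n : ℕ =>
            (Real.log (Mfb W n ε) - n * capacity W) / Real.sqrt n) Filter.atTop ≥
          Real.sqrt (Vmax W) * gcdfInv (1 / 2 * (ε * (1 + β) + (1 - β)))) := by
  intro ε hε hε1
  obtain ⟨P₀, hP₀⟩ := capacityAchievers_nonempty_of_Vmin_ne_zero hVmin.ne'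
  obtain ⟨⟨P₁, hP₁, hv₁⟩, ⟨P₂, hP₂, hv₂⟩, hle⟩ := exists_Vmin_Vmax hW hP₀
  have hVmax : 0 < Vmax W := hVmin.trans_le hle
  have h₁ : 0 < Real.sqrt (Vmin W) := Real.sqrt_pos.2 hVmin
  have h₂ : 0 < Real.sqrt (Vmax W) := Real.sqrt_pos.2 hVmax
  rw [← Real.sq_sqrt hVmin.le] at hv₁
  rw [← Real.sq_sqrt hVmax.le] at hv₂
  rw [Real.sqrt_div hVmin.le] at hβ
  have hβ0 : 0 < β := hβ ▸ div_pos h₁ h₂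
  have hA : 2 * β / (1 + β) / Real.sqrt (Vmin W) = 2 / ((1 + β) * Real.sqrt (Vmax W)) := by
    have : β * Real.sqrt (Vmax W) = Real.sqrt (Vmin W) := by rw [hβ, div_mul_cancel₀ _ h₂.ne']
    rw [← this]
    field_simp
  have key := fun r => le_liminf_of_bangVal_eq (r := r) hW hcol hP₁ hP₂ h₁ h₂
    (A := 2 * β / (1 + β)) (B := 2 / (1 + β)) (by positivity) (by positivity) (by field_simp; ring)
    hA (div_div _ _ _) hv₁ hv₂ hε hε1
  refine ⟨fun h => key _ ?_, fun h => key _ ?_⟩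
  · rw [le_div_iff₀ (by linarith)] at h
    rw [bangVal_neg_of_nonpos h₁ (by positivity)]
    · field_simp
    · rw [one_div_mul_eq_div, div_le_div_iff₀ (by linarith) two_pos]
      linarith
  · rw [div_lt_iff₀ (by linarith)] at h
    rw [bangVal_neg_of_pos h₂ (by linarith) (by nlinarith)]
    field_simp
    ring

end Paper
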